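/- For any prime p there exist a field K and a central division K-algebra D of degree p whose genus gen(D) is infinite, i.e., there are infinitely many pairwise nonisomorphic central division K-algebras of degree p having the same maximal subfields as D. -/

import Mathlib

open scoped TensorProduct
universe u

/-- A finite-dimensional `F`-algebra is *split* if it is a matrix algebra over `F`. -/
def IsSplit (F : Type u) [Field F] (A : Type u) [Ring A] [Algebra F A] : Prop :=
  ∃ n : ℕ, 0 < n ∧ Nonempty (A ≃ₐ[F] Matrix (Fin n) (Fin n) F)

/-- Brauer equivalence of two `F`-algebras. -/
def BrauerEquiv (F : Type u) [Field F] (A B : Type u) [Ring A] [Algebra F A]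
    [Ring B] [Algebra F B] : Prop :=
  ∃ n m : ℕ, 0 < n ∧ 0 < m ∧ Nonempty (Matrix (Fin n) (Fin n) A ≃ₐ[F] Matrix (Fin m) (Fin m) B)

/-- `A` is a finite-dimensional central simple `F`-algebra. -/
def IsCSA (F A : Type u) [Field F] [Ring A] [Algebra F A] : Prop :=
  Algebra.IsCentral F A ∧ IsSimpleRing A ∧ FiniteDimensional F A

/-- The `n`-fold tensor power of an `F`-algebra. -/
abbrev tpow (F : Type u) [Field F] (A : Type u) [Ring A] [Algebra F A] (n : ℕ) : Type u :=
  ⨂[F] _ : Fin n, A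

/-- The Brauer class of `A` is killed by `p`: its `p`-th tensor power is split. -/
def IsPTorsion (F : Type u) [Field F] (A : Type u) [Ring A] [Algebra F A] (p : ℕ) : Prop :=
  IsSplit F (tpow F A p)

/-- The restriction map `Br(F)[p] → Br(E)[p]` along `f : F →+* E` is injective:
two `p`-torsion Brauer classes that agree after scalar extension agree already over `F`. -/
def ResInjP (p : ℕ) (F E : Type u) [Field F] [Field E] (f : F →+* E) : Prop :=
  letI : Algebra F E := f.toAlgebra
  ∀ (A B : Type u) [Ring A] [Algebra F A] [Ring B] [Algebra F B],
    IsCSA F A → IsCSA F B → IsPTorsion F A p → IsPTorsion F B p →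
    BrauerEquiv E (E ⊗[F] A) (E ⊗[F] B) → BrauerEquiv F A B

/-- The restriction map `Br(F) → Br(E)` along `f : F →+* E` is injective. -/
def ResInj (F E : Type u) [Field F] [Field E] (f : F →+* E) : Prop :=
  letI : Algebra F E := f.toAlgebra
  ∀ (A B : Type u) [Ring A] [Algebra F A] [Ring B] [Algebra F B],
    IsCSA F A → IsCSA F B →
    BrauerEquiv E (E ⊗[F] A) (E ⊗[F] B) → BrauerEquiv F A B

/-- `D` is a central division algebra of degree `p` over `K`. -/
def IsCentralDivisionOfDeg (K D : Type u) [Field K] [DivisionRing D] [Algebra K D]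
    (p : ℕ) : Prop :=
  Algebra.IsCentral K D ∧ FiniteDimensional K D ∧ Module.finrank K D = p ^ 2

/-- Witness for STATEMENT 11: a field `K`, a central division `K`-algebra `D` of degree `p`,
and infinitely many pairwise nonisomorphic central division `K`-algebras of degree `p` all
having the same maximal subfields as `D` — i.e. the genus of `D` is infinite. -/
structure InfiniteGenusWitness (p : ℕ) : Type (u + 1) where
  K : Type u
  [fieldK : Field K]
  D : Type u
  [divD : DivisionRing D]
  [algD : Algebra K D]
  hD : IsCentralDivisionOfDeg K D p
  /-- an infinite family of members of the genus of `D` -/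
  D' : ℕ → Type u
  [divD' : ∀ n, DivisionRing (D' n)]
  [algD' : ∀ n, Algebra K (D' n)]
  hD' : ∀ n, IsCentralDivisionOfDeg K (D' n) p
  noniso : ∀ n m, n ≠ m → IsEmpty (D' n ≃ₐ[K] D' m)
  sameMaxSubfields : ∀ n, ∀ (L : Type u) [Field L] [Algebra K L], Module.finrank K L = p →
    (Nonempty (L →ₐ[K] D) ↔ Nonempty (L →ₐ[K] D' n))

/-!
For a primitive `p`-th root of unity `ζ ∈ K`, the symbol algebra `(a, b)` is generated by `i`, `j`
with `i ^ p = a`, `j ^ p = b`, `j * i = ζ • (i * j)`. It is a division algebra as soon as `b` is not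
a norm from `K(a ^ (1 / p))`, and `(a, b)`, `(a, b')` are not isomorphic if `b' / b` is not such a
norm. Skew commutation gives `((w - z * j) * i) ^ p = a * (w ^ p - b * N(z))` for `w ∈ K` and
`z ∈ K(i)`, so `c` is a `p`-th power in `(a, b)` if `w ^ p - c / a = b * N(z)` is solvable.

Start with a field containing `a` and infinitely many `b n` such that neither `b n` nor `b n / b m`
is a norm. Two kinds of extensions create no new norms. In an extension of degree prime to `p` a
determinant turns a norm equation for `e` into one for a power of `e` with exponent prime to `p`.
The extension adjoining generic solutions of all the equations above is the fraction field of a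
factorial ring with few units, and a norm lying in the ground field is the norm of a unit. The
union of a countable tower alternating the two is a field `K` such that every `c ∈ K` is a `p`-th
power in each `(a, b n)` and no extension of `K` has degree greater than `1` and prime to `p`.
The Galois closure of an extension of `K` of degree `p` has as Galois group a `p`-group, whose
subgroups of index `p` are normal. So the extension is itself Galois, by Kummer theory generated by
a `p`-th root of some `c`, and hence embedded in every `(a, b n)`.
-/

namespace InfiniteGenus

open Polynomial

/-! ### Norms from Kummer algebras -/

section CyclicNorm

/-- The norm `x · σ x ⋯ σ^{p-1} x` along a self-map `σ`, which in the applications is an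
endomorphism with `σ^p = id`. -/
def cyclicNorm {R : Type*} [CommMonoid R] (p : ℕ) (σ : R → R) (x : R) : R :=
  ∏ k ∈ Finset.range p, σ^[k] x

variable {R S E G : Type*} [CommMonoid R] [CommMonoid S] [FunLike E R R] [MonoidHomClass E R R]
  [FunLike G R S] [MonoidHomClass G R S] (p : ℕ)

lemma cyclicNorm_mul (σ : E) (x y : R) :
    cyclicNorm p σ (x * y) = cyclicNorm p σ x * cyclicNorm p σ y := by
  simp only [cyclicNorm, iterate_map_mul, Finset.prod_mul_distrib]

lemma cyclicNorm_pow (σ : E) (x : R) (n : ℕ) : cyclicNorm p σ (x ^ n) = cyclicNorm p σ x ^ n := by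
  simp only [cyclicNorm, iterate_map_pow, Finset.prod_pow]

lemma cyclicNorm_of_fixed {σ : R → R} {x : R} (hx : σ x = x) : cyclicNorm p σ x = x ^ p := by
  simp only [cyclicNorm, Function.iterate_fixed hx, Finset.prod_const, Finset.card_range]

lemma map_cyclicNorm (f : G) {σ : R → R} {σ' : S → S} (hf : ∀ x, f (σ x) = σ' (f x)) (x : R) :
    f (cyclicNorm p σ x) = cyclicNorm p σ' (f x) := by
  have hk (k : ℕ) : f (σ^[k] x) = σ'^[k] (f x) := Function.Semiconj.iterate_right hf k x
  simp only [cyclicNorm, map_prod, hk]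

lemma cyclicNorm_succ (σ : E) (x : R) :
    cyclicNorm (p + 1) σ x = σ (cyclicNorm p σ x) * x := by
  simp only [cyclicNorm, Finset.prod_range_succ', map_prod, Function.iterate_succ_apply',
    Function.iterate_zero, id]

variable {p}

lemma map_cyclicNorm_self {σ : E} (hσ : ∀ x, σ^[p] x = x) (x : R) :
    σ (cyclicNorm p σ x) = cyclicNorm p σ x := by
  cases p with
  | zero => simp [cyclicNorm]
  | succ n =>
    rw [map_cyclicNorm (n + 1) σ (σ' := σ) (fun _ => rfl), cyclicNorm, cyclicNorm,
      Finset.prod_range_succ, Finset.prod_range_succ', ← Function.iterate_succ_apply, hσ]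
    simp only [← Function.iterate_succ_apply, Function.iterate_zero, id]

lemma dvd_cyclicNorm (hp : p ≠ 0) (σ : R → R) (x : R) : x ∣ cyclicNorm p σ x :=
  Finset.dvd_prod_of_mem (fun k => σ^[k] x) (Finset.mem_range.2 (Nat.pos_of_ne_zero hp))

end CyclicNorm

section KummerNorm

/-- The substitution `X ↦ ζX`. -/
noncomputable def twist {F : Type*} [CommRing F] (ζ : F) : F[X] →ₐ[F] F[X] := aeval (C ζ * X)

/-- `e` is a norm from the Kummer algebra `F[X]/(X^p - a)`, on which the cyclic group of order `p`
acts by `X ↦ ζX`. Stated with polynomials so that it transports along ring homomorphisms. -/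
def IsKummerNorm {F : Type*} [CommRing F] (p : ℕ) (ζ a e : F) : Prop :=
  ∃ P : F[X], (X ^ p - C a) ∣ cyclicNorm p (twist ζ) P - C e

section CommRing

variable {F G : Type*} [CommRing F] [CommRing G] {p : ℕ} {ζ a : F}

@[simp] lemma twist_C (x : F) : twist ζ (C x) = C x := aeval_C _ _

@[simp] lemma twist_X : twist ζ (X : F[X]) = C ζ * X := aeval_X _

lemma iterate_twist_X (k : ℕ) : (twist ζ)^[k] (X : F[X]) = C (ζ ^ k) * X := by
  induction k with
  | zero => simp
  | succ k ih =>
    rw [Function.iterate_succ_apply', ih, map_mul, twist_C, twist_X, pow_succ, C_mul, mul_assoc]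

lemma iterate_twist_of_pow_eq_one (hζ : ζ ^ p = 1) (P : F[X]) : (twist ζ)^[p] P = P := by
  have h : twist ζ ^ p = AlgHom.id F F[X] := algHom_ext <| by
    rw [AlgHom.coe_pow, iterate_twist_X, hζ, C_1, one_mul, AlgHom.id_apply]
  rw [← AlgHom.coe_pow, h, AlgHom.id_apply]

lemma aeval_twist {A : Type*} [Ring A] [Algebra F A] (x : A) (P : F[X]) :
    aeval x (twist ζ P) = aeval (ζ • x) P := by
  have h : (aeval x).comp (twist ζ) = aeval (ζ • x) :=
    algHom_ext (by simp [Algebra.smul_def])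
  exact DFunLike.congr_fun h P

lemma eval_iterate_twist (s : ℕ) (y : F) (P : F[X]) :
    eval y ((twist ζ)^[s] P) = eval (ζ ^ s * y) P := by
  induction s generalizing y with
  | zero => simp
  | succ s ih =>
    rw [Function.iterate_succ_apply', ← coe_aeval_eq_eval, aeval_twist, coe_aeval_eq_eval, ih,
      smul_eq_mul, pow_succ, mul_assoc]

lemma map_twist (f : F →+* G) (P : F[X]) : (twist ζ P).map f = twist (f ζ) (P.map f) := by
  have h : (mapRingHom f).comp (twist ζ : F[X] →+* F[X]) =
      (twist (f ζ) : G[X] →+* G[X]).comp (mapRingHom f) := by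
    ext <;> simp
  exact DFunLike.congr_fun h P

lemma map_cyclicNorm_twist (f : F →+* G) (P : F[X]) :
    (cyclicNorm p (twist ζ) P).map f = cyclicNorm p (twist (f ζ)) (P.map f) :=
  map_cyclicNorm p (mapRingHom f) (map_twist f) P

lemma aeval_eq_of_dvd {A : Type*} [Ring A] [Algebra F A] {x : A} (hx : x ^ p = algebraMap F A a)
    {P Q : F[X]} (h : (X ^ p - C a) ∣ P - Q) : aeval x P = aeval x Q := by
  obtain ⟨S, hS⟩ := h
  rw [← sub_eq_zero, ← map_sub, hS, map_mul, map_sub, map_pow, aeval_X, aeval_C, hx, sub_self,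
    zero_mul]

lemma IsKummerNorm.exists_cyclicNorm_eq {A : Type*} [CommRing A] [Algebra F A] {e : F}
    (h : IsKummerNorm p ζ a e) (σ : A →ₐ[F] A) {x : A} (hx : x ^ p = algebraMap F A a)
    (hσ : σ x = ζ • x) : ∃ y, cyclicNorm p σ y = algebraMap F A e := by
  obtain ⟨P, hP⟩ := h
  refine ⟨aeval x P, ?_⟩
  rw [← map_cyclicNorm p (aeval x) (σ := twist ζ), aeval_eq_of_dvd hx hP, aeval_C]
  intro Q
  rw [aeval_twist, ← aeval_algHom_apply, hσ]

lemma IsKummerNorm.map (f : F →+* G) {e : F} (h : IsKummerNorm p ζ a e) :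
    IsKummerNorm p (f ζ) (f a) (f e) := by
  obtain ⟨P, hP⟩ := h
  refine ⟨P.map f, ?_⟩
  simpa [map_cyclicNorm_twist] using Polynomial.map_dvd f hP

lemma IsKummerNorm.mul {e e' : F} (h : IsKummerNorm p ζ a e) (h' : IsKummerNorm p ζ a e') :
    IsKummerNorm p ζ a (e * e') := by
  obtain ⟨P, hP⟩ := h
  obtain ⟨Q, hQ⟩ := h'
  refine ⟨P * Q, ?_⟩
  rw [cyclicNorm_mul, C_mul]
  exact dvd_mul_sub_mul hP hQ

lemma IsKummerNorm.pow {e : F} (h : IsKummerNorm p ζ a e) (n : ℕ) :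
    IsKummerNorm p ζ a (e ^ n) := by
  obtain ⟨P, hP⟩ := h
  refine ⟨P ^ n, ?_⟩
  rw [cyclicNorm_pow, C_pow]
  exact hP.trans (sub_dvd_pow_sub_pow _ _ n)

lemma isKummerNorm_pow (x : F) : IsKummerNorm p ζ a (x ^ p) :=
  ⟨C x, by rw [cyclicNorm_of_fixed p (twist_C x), C_pow, sub_self]; exact dvd_zero _⟩

end CommRing

section Field

variable {F : Type*} [Field F] {p : ℕ} {ζ a : F}

lemma IsKummerNorm.of_pow_of_coprime {e : F} {d : ℕ} (hp : 1 < p) (hd : d.Coprime p)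
    (h : IsKummerNorm p ζ a (e ^ d)) : IsKummerNorm p ζ a e := by
  obtain rfl | he := eq_or_ne e 0
  · simpa [zero_pow (by lia : p ≠ 0)] using isKummerNorm_pow (p := p) (ζ := ζ) (a := a) 0
  obtain ⟨m, -, hm⟩ := Nat.exists_mul_mod_eq_one_of_coprime hd hp
  set q := d * m / p
  have hdm : d * m = 1 + q * p := by rw [mul_comm q, ← hm, Nat.mod_add_div]
  have hmul := (h.pow m).mul (isKummerNorm_pow (p := p) (ζ := ζ) (a := a) (e⁻¹ ^ q))
  rwa [← pow_mul, hdm, pow_add, pow_one, ← pow_mul, mul_assoc, ← mul_pow, mul_inv_cancel₀ he,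
    one_pow, mul_one] at hmul

/-- When `a = r^p`, the Kummer algebra is the product of the `F[X]/(X - ζ^s r)`, which the
substitution `X ↦ ζX` permutes cyclically; so `(e, 1, …, 1)` has norm `e`. -/
lemma isKummerNorm_of_pow_eq (hp : 0 < p) (hζ : IsPrimitiveRoot ζ p) (ha : a ≠ 0) {r : F}
    (hr : r ^ p = a) (e : F) : IsKummerNorm p ζ a e := by
  have hr0 : r ≠ 0 := by rintro rfl; exact ha (by rw [← hr, zero_pow hp.ne'])
  have hinj : Set.InjOn (fun s => ζ ^ s * r) (Finset.range p : Set ℕ) := fun s hs t ht hst =>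
    hζ.pow_inj (Finset.mem_range.1 hs) (Finset.mem_range.1 ht) (mul_right_cancel₀ hr0 hst)
  set P : F[X] := Lagrange.interpolate (Finset.range p) (fun s => ζ ^ s * r)
    (fun s => if s = 0 then e else 1)
  have hP : ∀ s ∈ Finset.range p, P.eval (ζ ^ s * r) = if s = 0 then e else 1 := fun s hs =>
    Lagrange.eval_interpolate_at_node _ hinj hs
  have hzero : eval r (cyclicNorm p (twist ζ) P) = e := by
    rw [cyclicNorm, eval_prod, Finset.prod_eq_single_of_mem 0 (Finset.mem_range.2 hp)]
    · simpa using hP 0 (Finset.mem_range.2 hp)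
    · intro s hs hs0
      rw [eval_iterate_twist, hP s hs, if_neg hs0]
  have hfixed (s : ℕ) : (twist ζ)^[s] (cyclicNorm p (twist ζ) P) = cyclicNorm p (twist ζ) P :=
    Function.iterate_fixed
      (map_cyclicNorm_self (iterate_twist_of_pow_eq_one hζ.pow_eq_one) P) s
  refine ⟨P, ?_⟩
  rw [X_pow_sub_C_eq_prod hζ hp hr]
  refine Finset.prod_dvd_of_coprime (fun s hs t ht hst => ?_) (fun s _ => ?_)
  · refine Polynomial.isCoprime_X_sub_C_of_isUnit_sub ?_
    exact isUnit_iff_ne_zero.2 (sub_ne_zero.2 fun h => hst (hinj hs ht h))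
  · rw [dvd_iff_isRoot, IsRoot.def, eval_sub, eval_C, ← eval_iterate_twist, hfixed, hzero, sub_self]

lemma irreducible_of_not_isKummerNorm (hp : p.Prime) (hζ : IsPrimitiveRoot ζ p) (ha : a ≠ 0)
    {e : F} (he : ¬IsKummerNorm p ζ a e) : Irreducible (X ^ p - C a : F[X]) :=
  X_pow_sub_C_irreducible_of_prime hp fun _ hr => he (isKummerNorm_of_pow_eq hp.pos hζ ha hr e)

end Field

end KummerNorm

/-- The Kummer algebra `F[X]/(X^p - a)`. -/
abbrev KummerAlgebra {F : Type*} [CommRing F] (p : ℕ) (a : F) : Type _ :=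
  AdjoinRoot (X ^ p - C a : F[X])

namespace KummerAlgebra

variable {F : Type*} [CommRing F] {p : ℕ} {ζ a : F}

/-- The class of `X` in the Kummer algebra, a `p`-th root of `a`. -/
noncomputable def root (p : ℕ) (a : F) : KummerAlgebra p a := AdjoinRoot.root _

lemma root_pow : root p a ^ p = algebraMap F _ a := by
  have h := AdjoinRoot.eval₂_root (X ^ p - C a : F[X])
  rwa [eval₂_sub, eval₂_X_pow, eval₂_C, sub_eq_zero] at h

lemma aeval_root (P : F[X]) : aeval (root p a) P = AdjoinRoot.mk (X ^ p - C a) P :=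
  AdjoinRoot.aeval_eq P

lemma exists_aeval_root_eq (x : KummerAlgebra p a) : ∃ P : F[X], aeval (root p a) P = x := by
  obtain ⟨P, rfl⟩ := AdjoinRoot.mk_surjective x
  exact ⟨P, aeval_root P⟩

@[elab_as_elim]
lemma induction {motive : KummerAlgebra p a → Prop}
    (add : ∀ x y, motive x → motive y → motive (x + y))
    (smul_root_pow : ∀ (c : F) (t : ℕ), motive (c • root p a ^ t)) (x : KummerAlgebra p a) :
    motive x := by
  obtain ⟨P, rfl⟩ := exists_aeval_root_eq x
  induction P using Polynomial.induction_on' with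
  | add P Q hP hQ => rw [map_add]; exact add _ _ hP hQ
  | monomial n c => rw [aeval_monomial, ← Algebra.smul_def]; exact smul_root_pow c n

/-- The generator `A ↦ ζA` of the action of the cyclic group of order `p`. -/
noncomputable def rotate (a : F) (hζ : ζ ^ p = 1) : KummerAlgebra p a →ₐ[F] KummerAlgebra p a :=
  AdjoinRoot.liftAlgHom (X ^ p - C a) (Algebra.ofId F _) (ζ • root p a) <| by
    change eval₂ (algebraMap F _) _ _ = 0
    rw [eval₂_sub, eval₂_X_pow, eval₂_C, _root_.smul_pow, hζ, one_smul, root_pow, sub_self]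

@[simp] lemma rotate_root (hζ : ζ ^ p = 1) : rotate a hζ (root p a) = ζ • root p a :=
  AdjoinRoot.liftAlgHom_root ..

lemma aeval_root_twist (hζ : ζ ^ p = 1) (P : F[X]) :
    aeval (root p a) (twist ζ P) = rotate a hζ (aeval (root p a) P) := by
  rw [aeval_twist, ← rotate_root hζ, aeval_algHom_apply]

lemma iterate_rotate (hζ : ζ ^ p = 1) (x : KummerAlgebra p a) : (rotate a hζ)^[p] x = x := by
  obtain ⟨P, rfl⟩ := exists_aeval_root_eq x
  have h : Function.Semiconj (aeval (root p a)) (twist ζ) (rotate a hζ) := aeval_root_twist hζ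
  rw [← (h.iterate_right p).eq, iterate_twist_of_pow_eq_one hζ]

lemma isKummerNorm_iff (hζ : ζ ^ p = 1) {e : F} :
    IsKummerNorm p ζ a e ↔ ∃ x, cyclicNorm p (rotate a hζ) x = algebraMap F _ e := by
  refine ⟨fun h => h.exists_cyclicNorm_eq _ root_pow (rotate_root hζ), fun ⟨x, hx⟩ => ?_⟩
  obtain ⟨P, rfl⟩ := exists_aeval_root_eq x
  refine ⟨P, AdjoinRoot.mk_eq_mk.1 ?_⟩
  rw [← aeval_root, ← aeval_root, aeval_C, ← hx]
  exact map_cyclicNorm p (aeval (root p a)) (aeval_root_twist hζ) P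

lemma finite (hp : p ≠ 0) (a : F) : Module.Finite F (KummerAlgebra p a) :=
  (monic_X_pow_sub_C a hp).finite_adjoinRoot

lemma finrank [Nontrivial F] (hp : p ≠ 0) (a : F) : Module.finrank F (KummerAlgebra p a) = p := by
  rw [(AdjoinRoot.powerBasis' (monic_X_pow_sub_C a hp)).finrank, AdjoinRoot.powerBasis'_dim,
    natDegree_X_pow_sub_C]

lemma algebraMap_injective [IsDomain F] (hp : p ≠ 0) (a : F) :
    Function.Injective (algebraMap F (KummerAlgebra p a)) := by
  apply AdjoinRoot.of.injective_of_degree_ne_zero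
  rw [degree_X_pow_sub_C (Nat.pos_of_ne_zero hp)]
  exact_mod_cast hp

lemma isUnit_root (hp : p ≠ 0) (ha : IsUnit a) : IsUnit (root p a) := by
  rw [← isUnit_pow_iff hp, root_pow]
  exact ha.map _

lemma exists_algebraMap_eq_of_rotate_eq [IsDomain F] (hp : p ≠ 0) (hζ : IsPrimitiveRoot ζ p)
    {x : KummerAlgebra p a} (hx : rotate a hζ.pow_eq_one x = x) : ∃ c, algebraMap F _ c = x := by
  set pb := AdjoinRoot.powerBasis' (monic_X_pow_sub_C a hp)
  have hdim : pb.dim = p := natDegree_X_pow_sub_C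
  have hbasis (i : Fin pb.dim) : pb.basis i = root p a ^ (i : ℕ) := pb.basis_eq_pow i
  have hrotate : rotate a hζ.pow_eq_one x =
      ∑ i : Fin pb.dim, (ζ ^ (i : ℕ) * pb.basis.repr x i) • pb.basis i := by
    conv_lhs => rw [← pb.basis.sum_repr x]
    simp only [map_sum, map_smul, hbasis, map_pow, rotate_root, _root_.smul_pow, smul_smul,
      mul_comm]
  have hrepr (i : Fin pb.dim) (hi : (i : ℕ) ≠ 0) : pb.basis.repr x i = 0 := by
    have hfix : ζ ^ (i : ℕ) * pb.basis.repr x i = pb.basis.repr x i := by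
      conv_rhs => rw [← hx, hrotate, pb.basis.repr_sum_self]
    by_contra h0
    exact hζ.pow_ne_one_of_pos_of_lt hi (i.isLt.trans_eq hdim) ((mul_eq_right₀ h0).1 hfix)
  have hpos : 0 < pb.dim := by lia
  refine ⟨pb.basis.repr x ⟨0, hpos⟩, ?_⟩
  conv_rhs => rw [← pb.basis.sum_repr x]
  rw [Finset.sum_eq_single_of_mem ⟨0, hpos⟩ (Finset.mem_univ _) fun i _ hi => ?_]
  · rw [hbasis, pow_zero, Algebra.algebraMap_eq_smul_one]
  · rw [hrepr i fun h => hi (Fin.ext h), zero_smul]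

end KummerAlgebra

/-! ### Symbol algebras -/

section SemilinearDeterminant

lemma exists_cyclicNorm_eq_pow_card {M W ι : Type*} [CommRing M] [AddCommGroup W] [Module M W]
    [Fintype ι] (v : Module.Basis ι M W) {τ : M →+* M} (J : W →ₛₗ[τ] W) {p : ℕ} {β : M}
    (hJ : ∀ x, J^[p] x = β • x) : ∃ m, cyclicNorm p τ m = β ^ Fintype.card ι := by
  classical
  let c : ℕ → Matrix ι ι M := fun k => Matrix.of fun s t => v.repr (J^[k] (v s)) t
  have hsucc (k : ℕ) : c (k + 1) = τ.mapMatrix (c k) * c 1 := by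
    ext s t
    have hJk : J^[k + 1] (v s) = ∑ l, τ (c k s l) • J (v l) := by
      rw [Function.iterate_succ_apply']
      conv_lhs => rw [← v.sum_repr (J^[k] (v s))]
      simp only [map_sum, map_smulₛₗ, c, Matrix.of_apply]
    simp only [c, Matrix.of_apply, hJk, Matrix.mul_apply, RingHom.mapMatrix_apply, Matrix.map_apply,
      map_sum, map_smul, Finsupp.finsetSum_apply, Finsupp.smul_apply, smul_eq_mul,
      Function.iterate_one]
  have hdet (k : ℕ) : (c k).det = cyclicNorm k τ (c 1).det := by
    induction k with
    | zero =>
      have : c 0 = 1 := by ext s t; simp [c, Matrix.one_apply, Finsupp.single_apply]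
      simp [this, cyclicNorm]
    | succ k ih => rw [hsucc, Matrix.det_mul, ← RingHom.map_det, ih, cyclicNorm_succ]
  have hp : c p = β • (1 : Matrix ι ι M) := by
    ext s t
    simp [c, hJ, Matrix.one_apply, Finsupp.single_apply]
  exact ⟨(c 1).det, by rw [← hdet, hp, Matrix.det_smul, Matrix.det_one, mul_one]⟩

end SemilinearDeterminant

/-- Generators `i`, `j` of the symbol algebra `(a, b)`. -/
structure IsSymbolPair {F A : Type*} [CommRing F] [Ring A] [Algebra F A] (p : ℕ) (ζ a b : F)
    (i j : A) : Prop where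
  left_pow : i ^ p = algebraMap F A a
  right_pow : j ^ p = algebraMap F A b
  right_mul_left : j * i = ζ • (i * j)

lemma IsSymbolPair.map {F A B : Type*} [CommRing F] [Ring A] [Algebra F A] [Ring B] [Algebra F B]
    {p : ℕ} {ζ a b : F} {i j : A} (h : IsSymbolPair p ζ a b i j) (f : A →ₐ[F] B) :
    IsSymbolPair p ζ a b (f i) (f j) where
  left_pow := by rw [← map_pow, h.left_pow, f.commutes]
  right_pow := by rw [← map_pow, h.right_pow, f.commutes]
  right_mul_left := by rw [← map_mul, h.right_mul_left, map_smul, map_mul]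

/-- The underlying space `M[T]/(T^p - b)` of the symbol algebra `(A^p, b)`, for `M = F(A)`, with
`A^s T^t` standing for `i^s j^t`. -/
abbrev SymbolModel {F : Type*} (M : Type*) [Field F] [Field M] [Algebra F M] (p : ℕ) (b : F) :
    Type _ :=
  KummerAlgebra p (algebraMap F M b)

namespace SymbolModel

open KummerAlgebra

variable {F M : Type*} [Field F] [Field M] [Algebra F M] {p : ℕ} {ζ b : F} {A : M} {σ : M →ₐ[F] M}

/-- The class of `T`, which is the image of `j` in the model. -/
noncomputable def gen (M : Type*) [Field M] [Algebra F M] (p : ℕ) (b : F) : SymbolModel M p b :=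
  root p (algebraMap F M b)

@[elab_as_elim]
lemma induction {motive : SymbolModel M p b → Prop}
    (add : ∀ x y, motive x → motive y → motive (x + y))
    (smul_gen_pow : ∀ (m : M) (t : ℕ), motive (m • gen M p b ^ t)) (x : SymbolModel M p b) :
    motive x :=
  KummerAlgebra.induction add smul_gen_pow x

lemma algebraMap_pow_eq_one (hζ : ζ ^ p = 1) : algebraMap F M ζ ^ p = 1 := by
  rw [← map_pow, hζ, map_one]

/-- Right multiplication by `i` on the model. -/
noncomputable def rightMulI (b : F) (A : M) (hζ : ζ ^ p = 1) :
    SymbolModel M p b →ₗ[M] SymbolModel M p b :=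
  A • (rotate (algebraMap F M b) (algebraMap_pow_eq_one hζ)).toLinearMap

lemma rightMulI_apply (hζ : ζ ^ p = 1) (x : SymbolModel M p b) :
    rightMulI b A hζ x = A • rotate (algebraMap F M b) (algebraMap_pow_eq_one hζ) x := rfl

lemma rightMulI_gen_pow (hζ : ζ ^ p = 1) (t : ℕ) :
    rightMulI b A hζ (gen M p b ^ t) = (ζ ^ t • A) • gen M p b ^ t := by
  rw [rightMulI_apply, gen, map_pow, rotate_root, _root_.smul_pow, smul_smul, mul_comm,
    ← map_pow, ← Algebra.smul_def]

lemma gen_pow : gen M p b ^ p = b • 1 := by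
  rw [gen, root_pow, Algebra.algebraMap_eq_smul_one, algebraMap_smul]

lemma dvd_map_X_pow_sub_C (b : F) (σ : M →ₐ[F] M) :
    (X ^ p - C (algebraMap F M b)) ∣ (X ^ p - C (algebraMap F M b)).map (σ : M →+* M) := by
  simp

/-- The action of `σ` on the coefficients, fixing `T`. -/
noncomputable def coeffMap (b : F) (σ : M →ₐ[F] M) : SymbolModel M p b →ₐ[F] SymbolModel M p b :=
  AdjoinRoot.mapAlgHom σ _ _ (dvd_map_X_pow_sub_C b σ)

lemma coeffMap_gen : coeffMap b σ (gen M p b) = gen M p b :=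
  AdjoinRoot.map_root _ _ _ (dvd_map_X_pow_sub_C b σ)

lemma coeffMap_smul (m : M) (x : SymbolModel M p b) :
    coeffMap b σ (m • x) = σ m • coeffMap b σ x := by
  rw [Algebra.smul_def, map_mul, Algebra.smul_def]
  exact congrArg (· * _) (AdjoinRoot.map_of _ _ _ (dvd_map_X_pow_sub_C b σ) m)

/-- Left multiplication by `j` on the model. -/
noncomputable def leftMulJ (b : F) (σ : M →ₐ[F] M) :
    SymbolModel M p b →ₛₗ[(σ : M →+* M)] SymbolModel M p b where
  toFun x := gen M p b * coeffMap b σ x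
  map_add' x y := by rw [map_add, mul_add]
  map_smul' m x := by rw [coeffMap_smul, mul_smul_comm]; rfl

lemma leftMulJ_apply (x : SymbolModel M p b) : leftMulJ b σ x = gen M p b * coeffMap b σ x := rfl

lemma leftMulJ_smul_gen_pow (m : M) (t : ℕ) :
    leftMulJ b σ (m • gen M p b ^ t) = σ m • gen M p b ^ (t + 1) := by
  rw [leftMulJ_apply, coeffMap_smul, map_pow, coeffMap_gen, mul_smul_comm, pow_succ']

lemma iterate_leftMulJ_smul_gen_pow (m : M) (t k : ℕ) :
    (leftMulJ b σ)^[k] (m • gen M p b ^ t) = σ^[k] m • gen M p b ^ (t + k) := by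
  induction k with
  | zero => rfl
  | succ k ih =>
    rw [Function.iterate_succ_apply', ih, leftMulJ_smul_gen_pow, Function.iterate_succ_apply',
      add_assoc]

lemma iterate_leftMulJ (hσ : ∀ m, σ^[p] m = m) (x : SymbolModel M p b) :
    (leftMulJ b σ)^[p] x = algebraMap F M b • x := by
  induction x using SymbolModel.induction with
  | add x y hx hy => rw [iterate_map_add, hx, hy, smul_add]
  | smul_gen_pow m t =>
    rw [iterate_leftMulJ_smul_gen_pow, hσ, pow_add, gen_pow, mul_smul_one, algebraMap_smul,
      smul_comm]

lemma leftMulJ_rightMulI (hζ : ζ ^ p = 1) (hA : σ A = ζ • A) (x : SymbolModel M p b) :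
    leftMulJ b σ (rightMulI b A hζ x) = rightMulI b A hζ (leftMulJ b σ x) := by
  induction x using SymbolModel.induction with
  | add x y hx hy => rw [map_add, map_add, hx, hy, map_add, map_add]
  | smul_gen_pow m t =>
    rw [map_smul, rightMulI_gen_pow, smul_smul, leftMulJ_smul_gen_pow, leftMulJ_smul_gen_pow,
      map_smul, rightMulI_gen_pow, smul_smul, map_mul, map_smul, hA, smul_smul, ← pow_succ]

end SymbolModel

/-- The symbol algebra `(A^p, b)` over `F`, for `M = F(A)`: the `F`-linear endomorphisms of its
underlying space that commute with the right multiplications by `i` and by `j`. Realizing it as a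
centralizer makes associativity free; its elements are determined by their values at `1`. -/
noncomputable def symbolAlgebra {F M : Type*} [Field F] [Field M] [Algebra F M] {p : ℕ} {ζ : F}
    (b : F) (A : M) (hζ : ζ ^ p = 1) :
    Subalgebra F (Module.End F (SymbolModel M p b)) :=
  Subalgebra.centralizer F
    {(SymbolModel.rightMulI b A hζ).restrictScalars F, LinearMap.mulLeft F (SymbolModel.gen M p b)}

namespace symbolAlgebra

open KummerAlgebra SymbolModel

variable {F M : Type*} [Field F] [Field M] [Algebra F M] {p : ℕ} {ζ b : F} {A : M} {σ : M →ₐ[F] M}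
  (hζ : ζ ^ p = 1)

lemma mem_iff {d : Module.End F (SymbolModel M p b)} : d ∈ symbolAlgebra b A hζ ↔
    (∀ x, rightMulI b A hζ (d x) = d (rightMulI b A hζ x)) ∧
      ∀ x, gen M p b * d x = d (gen M p b * x) := by
  simp only [symbolAlgebra, Subalgebra.mem_centralizer_iff, Set.mem_insert_iff,
    Set.mem_singleton_iff, forall_eq_or_imp, forall_eq]
  rw [LinearMap.ext_iff, LinearMap.ext_iff]
  rfl

/-- The inclusion of `M` into the symbol algebra, by left multiplications. -/
noncomputable def inclusion (b : F) (A : M) (hζ : ζ ^ p = 1) : M →ₐ[F] symbolAlgebra b A hζ :=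
  (Algebra.lsmul F F (SymbolModel M p b)).codRestrict _ fun m => (mem_iff hζ).2
    ⟨fun x => map_smul (rightMulI b A hζ) m x, fun x => mul_smul_comm m _ x⟩

/-- The generator `j` of the symbol algebra. -/
noncomputable def genJ (b : F) (hζ : ζ ^ p = 1) (hA : σ A = ζ • A) : symbolAlgebra b A hζ :=
  ⟨LinearMap.mulLeft F (gen M p b) ∘ₗ (coeffMap b σ).toLinearMap, (mem_iff hζ).2
    ⟨fun x => (leftMulJ_rightMulI hζ hA x).symm, fun x => by simp [coeffMap_gen]⟩⟩

/-- Evaluation at `1`, which identifies the symbol algebra with its underlying space. -/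
noncomputable def evalOne (b : F) (A : M) (hζ : ζ ^ p = 1) :
    symbolAlgebra b A hζ →ₗ[F] SymbolModel M p b :=
  LinearMap.applyₗ (1 : SymbolModel M p b) ∘ₗ (symbolAlgebra b A hζ).val.toLinearMap

lemma evalOne_one : evalOne b A hζ 1 = 1 := rfl

lemma evalOne_inclusion_mul (m : M) (d : symbolAlgebra b A hζ) :
    evalOne b A hζ (inclusion b A hζ m * d) = m • evalOne b A hζ d := rfl

lemma evalOne_genJ_mul (hA : σ A = ζ • A) (d : symbolAlgebra b A hζ) :
    evalOne b A hζ (genJ b hζ hA * d) = leftMulJ b σ (evalOne b A hζ d) := rfl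

lemma evalOne_genJ_pow (hA : σ A = ζ • A) (t : ℕ) :
    evalOne b A hζ (genJ b hζ hA ^ t) = gen M p b ^ t := by
  induction t with
  | zero => rw [pow_zero, pow_zero, evalOne_one]
  | succ t ih =>
    rw [pow_succ', evalOne_genJ_mul, ih, ← one_smul M (gen M p b ^ t), leftMulJ_smul_gen_pow,
      map_one, one_smul]

lemma evalOne_injective (hgen : Function.Surjective (aeval A : F[X] →ₐ[F] M)) :
    Function.Injective (evalOne b A hζ) := by
  refine (injective_iff_map_eq_zero _).2 ?_
  rintro ⟨d, hd⟩ (h1 : d 1 = 0)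
  obtain ⟨hI, hJ⟩ := (mem_iff hζ).1 hd
  have hpow (s : ℕ) : d (A ^ s • 1) = 0 := by
    induction s with
    | zero => rwa [pow_zero, one_smul]
    | succ s ih =>
      have h := hI (A ^ s • 1)
      rwa [ih, map_zero, map_smul, ← pow_zero (gen M p b), rightMulI_gen_pow, pow_zero, pow_zero,
        one_smul, smul_smul, ← pow_succ, eq_comm] at h
  have hsmul_one (m : M) : d (m • 1) = 0 := by
    obtain ⟨P, rfl⟩ := hgen m
    induction P using Polynomial.induction_on' with
    | add P Q hP hQ => rw [map_add, add_smul, map_add, hP, hQ, add_zero]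
    | monomial n c => rw [aeval_monomial, ← Algebra.smul_def, smul_assoc, map_smul, hpow, smul_zero]
  refine Subtype.ext (LinearMap.ext fun x => (?_ : d x = 0))
  induction x using SymbolModel.induction with
  | add x y hx hy => rw [map_add, hx, hy, add_zero]
  | smul_gen_pow m t =>
    induction t with
    | zero => rw [pow_zero, hsmul_one]
    | succ t ih => rw [pow_succ', ← mul_smul_comm, ← hJ, ih, mul_zero]

lemma evalOne_surjective (hA : σ A = ζ • A) : Function.Surjective (evalOne b A hζ) := fun x => by
  induction x using SymbolModel.induction with
  | add x y hx hy =>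
    obtain ⟨d, hd⟩ := hx
    obtain ⟨d', hd'⟩ := hy
    exact ⟨d + d', by rw [map_add, hd, hd']⟩
  | smul_gen_pow m t =>
    exact ⟨inclusion b A hζ m * genJ b hζ hA ^ t, by
      rw [evalOne_inclusion_mul, evalOne_genJ_pow]⟩

lemma evalOne_inclusion (m : M) : evalOne b A hζ (inclusion b A hζ m) = m • 1 := rfl

lemma inclusion_injective (hp : p ≠ 0) : Function.Injective (inclusion b A hζ) := fun m m' h => by
  refine algebraMap_injective hp (algebraMap F M b) ?_
  rw [Algebra.algebraMap_eq_smul_one m, Algebra.algebraMap_eq_smul_one m']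
  exact congrArg (evalOne b A hζ) h

lemma evalOne_genJ (hA : σ A = ζ • A) : evalOne b A hζ (genJ b hζ hA) = leftMulJ b σ 1 := rfl

lemma genJ_mul_inclusion (hgen : Function.Surjective (aeval A : F[X] →ₐ[F] M))
    (hA : σ A = ζ • A) (m : M) :
    genJ b hζ hA * inclusion b A hζ m = inclusion b A hζ (σ m) * genJ b hζ hA := by
  apply evalOne_injective hζ hgen
  rw [evalOne_genJ_mul, evalOne_inclusion_mul, evalOne_inclusion, evalOne_genJ, map_smulₛₗ]
  rfl

lemma genJ_pow (hgen : Function.Surjective (aeval A : F[X] →ₐ[F] M)) (hA : σ A = ζ • A) :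
    genJ b hζ hA ^ p = algebraMap F _ b := by
  apply evalOne_injective hζ hgen
  rw [evalOne_genJ_pow, gen_pow, Algebra.algebraMap_eq_smul_one (A := symbolAlgebra b A hζ) b,
    map_smul, evalOne_one]

lemma isSymbolPair {a : F} (ha : A ^ p = algebraMap F M a)
    (hgen : Function.Surjective (aeval A : F[X] →ₐ[F] M)) (hA : σ A = ζ • A) :
    IsSymbolPair p ζ a b (inclusion b A hζ A) (genJ b hζ hA) where
  left_pow := by rw [← map_pow, ha, AlgHom.commutes]
  right_pow := genJ_pow hζ hgen hA
  right_mul_left := by rw [genJ_mul_inclusion hζ hgen, hA, map_smul, smul_mul_assoc]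

/-- Evaluation at `1` as a linear isomorphism. -/
noncomputable def evalOneEquiv (b : F) (hgen : Function.Surjective (aeval A : F[X] →ₐ[F] M))
    (hA : σ A = ζ • A) : symbolAlgebra b A hζ ≃ₗ[F] SymbolModel M p b :=
  LinearEquiv.ofBijective (evalOne b A hζ) ⟨evalOne_injective hζ hgen, evalOne_surjective hζ hA⟩

lemma finite (hp : p ≠ 0) [Module.Finite F M] (hgen : Function.Surjective (aeval A : F[X] →ₐ[F] M))
    (hA : σ A = ζ • A) : Module.Finite F (symbolAlgebra b A hζ) :=
  have := KummerAlgebra.finite hp (algebraMap F M b)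
  have := Module.Finite.trans (R := F) M (SymbolModel M p b)
  .equiv (evalOneEquiv hζ b hgen hA).symm

lemma finrank (hp : p ≠ 0) (hgen : Function.Surjective (aeval A : F[X] →ₐ[F] M))
    (hA : σ A = ζ • A) :
    Module.finrank F (symbolAlgebra b A hζ) = Module.finrank F M * p := by
  rw [(evalOneEquiv hζ b hgen hA).finrank_eq, ← Module.finrank_mul_finrank F M,
    KummerAlgebra.finrank hp]

lemma exists_inclusion_eq_of_commute (hp : p ≠ 0) (hζ : IsPrimitiveRoot ζ p)
    (hgen : Function.Surjective (aeval A : F[X] →ₐ[F] M)) (hA0 : A ≠ 0)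
    {d : symbolAlgebra b A hζ.pow_eq_one} (hd : Commute d (inclusion b A hζ.pow_eq_one A)) :
    ∃ m, inclusion b A hζ.pow_eq_one m = d := by
  have hfix :
      A • rotate (algebraMap F M b) (algebraMap_pow_eq_one hζ.pow_eq_one) (evalOne b A _ d) =
        A • evalOne b A hζ.pow_eq_one d := by
    rw [← evalOne_inclusion_mul, ← hd.eq]
    refine (((mem_iff _).1 d.2).1 1).trans ?_
    rw [rightMulI_apply, map_one]
    rfl
  obtain ⟨m, hm⟩ := exists_algebraMap_eq_of_rotate_eq hp
    (hζ.map_of_injective (algebraMap F M).injective) (smul_right_injective _ hA0 hfix)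
  refine ⟨m, evalOne_injective _ hgen ?_⟩
  rw [← hm, evalOne_inclusion, Algebra.algebraMap_eq_smul_one m]

lemma exists_algebraMap_eq_of_mem_center (hp : p ≠ 0) (hζ : IsPrimitiveRoot ζ p)
    (hgen : Function.Surjective (aeval A : F[X] →ₐ[F] M)) (hA : σ A = ζ • A) (hA0 : A ≠ 0)
    (hb : b ≠ 0) (hσ : ∀ m, σ m = m → ∃ c, algebraMap F M c = m)
    {d : symbolAlgebra b A hζ.pow_eq_one} (hd : ∀ d', Commute d d') :
    ∃ c, algebraMap F _ c = d := by
  obtain ⟨m, rfl⟩ := exists_inclusion_eq_of_commute hp hζ hgen hA0 (hd _)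
  have hJ : IsUnit (genJ b hζ.pow_eq_one hA) := by
    rw [← isUnit_pow_iff hp, genJ_pow _ hgen]
    exact (isUnit_iff_ne_zero.2 hb).map _
  have hm : inclusion b A hζ.pow_eq_one (σ m) = inclusion b A _ m := by
    apply hJ.mul_right_cancel
    rw [← genJ_mul_inclusion _ hgen, (hd _).eq]
  obtain ⟨c, rfl⟩ := hσ m (inclusion_injective _ hp hm)
  exact ⟨c, ((inclusion b A _).commutes c).symm⟩

section Division

variable {hζ} (hp : p ≠ 0) (hσ : ∀ m, σ^[p] m = m)
  (hb : ∀ m, ∀ r < p, r ≠ 0 → cyclicNorm p σ m ≠ algebraMap F M b ^ r)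

include hp hσ hb

lemma eq_top_of_leftMulJ_mem {W : Submodule M (SymbolModel M p b)}
    (hW : ∀ w ∈ W, leftMulJ b σ w ∈ W) (hne : W ≠ ⊥) : W = ⊤ := by
  have := KummerAlgebra.finite hp (algebraMap F M b)
  let J : W →ₛₗ[(σ : M →+* M)] W := ((leftMulJ b σ).comp W.subtype).codRestrict W fun w => hW w w.2
  have hJ (k : ℕ) (w : W) : (J^[k] w : SymbolModel M p b) = (leftMulJ b σ)^[k] w := by
    induction k with
    | zero => rfl
    | succ k ih => rw [Function.iterate_succ_apply', Function.iterate_succ_apply', ← ih]; rfl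
  obtain ⟨m, hm⟩ := exists_cyclicNorm_eq_pow_card (Module.finBasis M W) J (p := p)
    fun w => Subtype.ext ((hJ p w).trans (iterate_leftMulJ hσ _))
  rw [Fintype.card_fin] at hm
  refine Submodule.eq_top_of_finrank_eq (le_antisymm (Submodule.finrank_le W) ?_)
  rw [KummerAlgebra.finrank hp]
  by_contra! hlt
  exact hb m _ hlt (Submodule.finrank_eq_zero.not.2 hne) hm

lemma noZeroDivisors (hgen : Function.Surjective (aeval A : F[X] →ₐ[F] M)) (hA : σ A = ζ • A) :
    NoZeroDivisors (symbolAlgebra b A hζ) where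
  eq_zero_or_eq_zero_of_mul_eq_zero {x y} hxy := by
    by_contra! hne
    let W : Submodule M (SymbolModel M p b) :=
      { carrier := {n | ∃ d, d * y = 0 ∧ evalOne b A hζ d = n}
        zero_mem' := ⟨0, zero_mul _, map_zero _⟩
        add_mem' := by
          rintro _ _ ⟨d, hd, rfl⟩ ⟨d', hd', rfl⟩
          exact ⟨d + d', by rw [add_mul, hd, hd', add_zero], map_add _ _ _⟩
        smul_mem' := by
          rintro m _ ⟨d, hd, rfl⟩
          exact ⟨inclusion b A hζ m * d, by rw [mul_assoc, hd, mul_zero], rfl⟩ }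
    have hW : W = ⊤ := by
      refine eq_top_of_leftMulJ_mem hp hσ hb ?_ fun h => ?_
      · rintro _ ⟨d, hd, rfl⟩
        exact ⟨genJ b hζ hA * d, by rw [mul_assoc, hd, mul_zero], rfl⟩
      · have hx : evalOne b A hζ x ∈ W := ⟨x, hxy, rfl⟩
        rw [h, Submodule.mem_bot, map_eq_zero_iff _ (evalOne_injective hζ hgen)] at hx
        exact hne.1 hx
    obtain ⟨d, hd, hd1⟩ : evalOne b A hζ 1 ∈ W := hW ▸ Submodule.mem_top
    rw [evalOne_injective hζ hgen hd1, one_mul] at hd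
    exact hne.2 hd

end Division

end symbolAlgebra

theorem exists_division_symbolAlgebra {F : Type u} [Field F] {p : ℕ} {ζ a b : F} (hp : p.Prime)
    (hζ : IsPrimitiveRoot ζ p) (ha : a ≠ 0) (hb0 : b ≠ 0) (hb : ¬IsKummerNorm p ζ a b) :
    ∃ (D : Type u) (_ : DivisionRing D) (_ : Algebra F D) (i j : D),
      IsCentralDivisionOfDeg F D p ∧ IsSymbolPair p ζ a b i j ∧
        ∀ d, Commute d i → ∃ P : F[X], aeval i P = d := by
  have : Fact (Irreducible (X ^ p - C a : F[X])) := ⟨irreducible_of_not_isKummerNorm hp hζ ha hb⟩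
  have hζ1 := hζ.pow_eq_one
  let D := symbolAlgebra b (KummerAlgebra.root p a) hζ1
  have hgen : Function.Surjective (aeval (KummerAlgebra.root p a)) :=
    KummerAlgebra.exists_aeval_root_eq
  have hrotate := KummerAlgebra.rotate_root (a := a) hζ1
  have hroot := (KummerAlgebra.isUnit_root hp.ne_zero (isUnit_iff_ne_zero.2 ha)).ne_zero
  have := KummerAlgebra.finite hp.ne_zero a
  have hfinite : Module.Finite F D := symbolAlgebra.finite hζ1 hp.ne_zero hgen hrotate
  have hfinrank : Module.finrank F D = p ^ 2 := by
    rw [symbolAlgebra.finrank hζ1 hp.ne_zero hgen hrotate, KummerAlgebra.finrank hp.ne_zero, sq]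
  have hnorm (m : KummerAlgebra p a) (r : ℕ) (hrp : r < p) (hr : r ≠ 0) :
      cyclicNorm p (KummerAlgebra.rotate a hζ1) m ≠ algebraMap F _ b ^ r := fun h =>
    hb <| .of_pow_of_coprime hp.one_lt
      (Nat.coprime_of_lt_prime hr hrp hp).symm
      ((KummerAlgebra.isKummerNorm_iff hζ1).2 ⟨m, by rw [h, map_pow]⟩)
  have : NoZeroDivisors D :=
    symbolAlgebra.noZeroDivisors hp.ne_zero (KummerAlgebra.iterate_rotate hζ1) hnorm hgen hrotate
  have : Nontrivial D := Module.nontrivial_of_finrank_pos (hfinrank ▸ pow_pos hp.pos 2)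
  have : IsDomain D := NoZeroDivisors.to_isDomain D
  have hcenter (d : D) (hd : d ∈ Subalgebra.center F D) : d ∈ (⊥ : Subalgebra F D) :=
    Algebra.mem_bot.2 <|
      symbolAlgebra.exists_algebraMap_eq_of_mem_center hp.ne_zero hζ hgen hrotate hroot hb0
        (fun _ => KummerAlgebra.exists_algebraMap_eq_of_rotate_eq hp.ne_zero hζ)
        fun d' => (Subalgebra.mem_center_iff.1 hd d').symm
  have hpair := symbolAlgebra.isSymbolPair (b := b) hζ1 KummerAlgebra.root_pow hgen hrotate
  have hcommute (d : D)
      (hd : Commute d (symbolAlgebra.inclusion b _ hζ1 (KummerAlgebra.root p a))) :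
      ∃ P : F[X], aeval (symbolAlgebra.inclusion b _ hζ1 (KummerAlgebra.root p a)) P = d := by
    obtain ⟨m, rfl⟩ := symbolAlgebra.exists_inclusion_eq_of_commute hp.ne_zero hζ hgen hroot hd
    obtain ⟨P, rfl⟩ := hgen m
    exact ⟨P, aeval_algHom_apply _ _ _⟩
  exact ⟨D, divisionRingOfFiniteDimensional F D, inferInstance, _, _,
    ⟨⟨fun d hd => hcenter d hd⟩, hfinite, hfinrank⟩, hpair, hcommute⟩

section SkewCommutation

variable {F A : Type*} [CommRing F] [Ring A] [Algebra F A] {ζ : F} {x t : A}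

lemma mul_aeval_eq_aeval_twist_mul (h : t * x = ζ • (x * t)) (P : F[X]) :
    t * aeval x P = aeval x (twist ζ P) * t := by
  rw [aeval_twist]
  have hsemi : SemiconjBy t x (ζ • x) := by rw [SemiconjBy, h, smul_mul_assoc]
  induction P using Polynomial.induction_on' with
  | add P Q hP hQ => rw [map_add, map_add, mul_add, add_mul, hP, hQ]
  | monomial n c =>
    rw [aeval_monomial, aeval_monomial, ← mul_assoc, ← Algebra.commutes, mul_assoc,
      (hsemi.pow_right n).eq, mul_assoc]

lemma aeval_mul_pow (h : t * x = ζ • (x * t)) (P : F[X]) (n : ℕ) :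
    (aeval x P * t) ^ n = aeval x (cyclicNorm n (twist ζ) P) * t ^ n := by
  induction n with
  | zero => simp [cyclicNorm]
  | succ n ih =>
    rw [pow_succ', ih, cyclicNorm_succ, mul_comm (twist ζ _), map_mul, pow_succ', ← mul_assoc,
      mul_assoc _ t, mul_aeval_eq_aeval_twist_mul h]
    simp only [mul_assoc]

end SkewCommutation

/-- A condition under which `c` has a `p`-th root in every algebra containing a symbol pair for
`(a, b)`: either `c` is a `p`-th power in the Kummer algebra of `a`, or `c / a` is of the form
`w ^ p - b * n` with `n` a norm. -/
def HasSymbolRoot {F : Type*} [CommRing F] (p : ℕ) (ζ a b c : F) : Prop :=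
  (∃ P : F[X], (X ^ p - C a) ∣ P ^ p - C c) ∨
    ∃ w n : F, IsKummerNorm p ζ a n ∧ c = a * (w ^ p - b * n)

lemma HasSymbolRoot.map {F G : Type*} [CommRing F] [CommRing G] {p : ℕ} {ζ a b c : F} (f : F →+* G)
    (h : HasSymbolRoot p ζ a b c) : HasSymbolRoot p (f ζ) (f a) (f b) (f c) := by
  obtain ⟨P, hP⟩ | ⟨w, n, hn, rfl⟩ := h
  · exact .inl ⟨P.map f, by simpa using Polynomial.map_dvd f hP⟩
  · exact .inr ⟨f w, f n, hn.map f, by simp⟩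

section SymbolPair

variable {F : Type*} [Field F] {p : ℕ} {ζ a b c : F}

lemma cyclicNorm_twist_C_sub_X (hp : 0 < p) (hζ : IsPrimitiveRoot ζ p) (w : F) :
    cyclicNorm p (twist ζ) (C w - X) = C (w ^ p) - X ^ p := by
  have hprod := X_pow_sub_C_eq_prod (hζ.map_of_injective (C_injective (R := F))) hp
    (α := (X : F[X])) rfl
  have heval := congrArg (eval (C w)) hprod
  simp only [eval_prod, eval_sub, eval_pow, eval_X, eval_C] at heval
  rw [C_pow, heval, cyclicNorm]
  refine Finset.prod_congr rfl fun k _ => ?_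
  rw [iterate_map_sub, iterate_twist_X, Function.iterate_fixed (twist_C w), C_pow]

lemma IsSymbolPair.exists_pow_eq {D : Type*} [Ring D] [Algebra F D] {i j : D}
    (hij : IsSymbolPair p ζ a b i j) (hp : 0 < p) (hζ : IsPrimitiveRoot ζ p)
    (hc : HasSymbolRoot p ζ a b c) : ∃ u : D, u ^ p = algebraMap F D c := by
  obtain ⟨P, hP⟩ | ⟨w, n, ⟨Y, hY⟩, rfl⟩ := hc
  · exact ⟨aeval i P, by rw [← map_pow, aeval_eq_of_dvd hij.left_pow hP, aeval_C]⟩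
  set j' := aeval i Y * j
  have hj' : j' ^ p = algebraMap F D (b * n) := by
    rw [aeval_mul_pow hij.right_mul_left, hij.right_pow, aeval_eq_of_dvd hij.left_pow hY, aeval_C,
      ← map_mul, mul_comm]
  have hij' : i * j' = ζ⁻¹ • (j' * i) := by
    have hcomm : i * aeval i Y = aeval i Y * i := by
      simpa only [aeval_X] using (((Commute.all X Y).map (aeval i : F[X] →ₐ[F] D))).eq
    rw [eq_inv_smul_iff₀ (hζ.ne_zero hp.ne'), mul_assoc, hij.right_mul_left, mul_smul_comm,
      ← mul_assoc, hcomm, mul_assoc]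
  refine ⟨aeval j' (C w - X) * i, ?_⟩
  rw [aeval_mul_pow hij', cyclicNorm_twist_C_sub_X hp hζ.inv, map_sub, map_pow (aeval j'), aeval_X,
    aeval_C, hj', hij.left_pow, ← map_sub, ← map_mul, mul_comm]

end SymbolPair

section CommonSubfield

variable {F D : Type*} [Field F] {p : ℕ} {ζ a b b' : F} [DivisionRing D] [Algebra F D]
  {i j i' j' : D}

lemma exists_eigenvector_of_pow_eq_one {V : Type*} [AddCommGroup V] [Module F V]
    [Module.Finite F V] [Nontrivial V] (hp : 0 < p) (hζ : IsPrimitiveRoot ζ p)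
    {T : Module.End F V} (hT : T ^ p = 1) : ∃ (k : ℕ) (x : V), x ≠ 0 ∧ T x = ζ ^ k • x := by
  have hdvd : minpoly F T ∣ X ^ p - C 1 := minpoly.dvd _ _ (by simp [hT])
  have hsplits := (X_pow_sub_one_splits hζ).of_dvd (X_pow_sub_C_ne_zero hp 1) hdvd
  obtain ⟨μ, hμ⟩ :=
    hsplits.exists_eval_eq_zero (minpoly.degree_pos (Algebra.IsIntegral.isIntegral T)).ne'
  have hμp : μ ^ p = 1 := by simpa [sub_eq_zero] using IsRoot.dvd hμ hdvd
  have : NeZero p := ⟨hp.ne'⟩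
  obtain ⟨k, -, rfl⟩ := hζ.eq_pow_of_pow_eq_one hμp
  obtain ⟨x, hx⟩ := (Module.End.hasEigenvalue_of_isRoot hμ).exists_hasEigenvector
  exact ⟨k, x, hx.2, hx.apply_eq_smul⟩

lemma exists_mul_eq_smul_mul [FiniteDimensional F D] (hp : 0 < p) (hζ : IsPrimitiveRoot ζ p)
    (ha : a ≠ 0) (hi : i ^ p = algebraMap F D a) (hi' : i' ^ p = algebraMap F D a) :
    ∃ (k : ℕ) (x : D), x ≠ 0 ∧ i * x = ζ ^ k • (x * i') := by
  have hi'0 : i' ≠ 0 := by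
    rintro rfl
    rw [zero_pow hp.ne', eq_comm, FaithfulSMul.algebraMap_eq_zero_iff] at hi'
    exact ha hi'
  let T : Module.End F D := LinearMap.mulLeft F i * LinearMap.mulRight F i'⁻¹
  have hT : T ^ p = 1 := by
    have hcomm : Commute (LinearMap.mulLeft F i) (LinearMap.mulRight F i'⁻¹) := by
      ext x; simp [mul_assoc]
    ext x
    rw [hcomm.mul_pow, LinearMap.pow_mulLeft, LinearMap.pow_mulRight, inv_pow, hi, hi',
      Module.End.mul_apply, LinearMap.mulLeft_apply, LinearMap.mulRight_apply, ← mul_assoc,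
      Algebra.commutes, mul_inv_cancel_right₀ (by simpa using ha), Module.End.one_apply]
  obtain ⟨k, x, hx0, hx⟩ := exists_eigenvector_of_pow_eq_one hp hζ hT
  change i * (x * i'⁻¹) = ζ ^ k • x at hx
  refine ⟨k, x, hx0, ?_⟩
  rw [← smul_mul_assoc, ← hx, ← mul_assoc, inv_mul_cancel_right₀ hi'0]

namespace IsSymbolPair

lemma right_ne_zero (hij : IsSymbolPair p ζ a b i j) (hp : p ≠ 0) (hb : b ≠ 0) : j ≠ 0 := by
  rintro rfl
  have h := hij.right_pow
  rw [zero_pow hp, eq_comm, FaithfulSMul.algebraMap_eq_zero_iff] at h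
  exact hb h

lemma right_pow_mul_left (hij : IsSymbolPair p ζ a b i j) (k : ℕ) :
    j ^ k * i = ζ ^ k • (i * j ^ k) := by
  induction k with
  | zero => simp
  | succ n ih =>
    rw [pow_succ', mul_assoc, ih, mul_smul_comm, ← mul_assoc, hij.right_mul_left, smul_mul_assoc,
      smul_smul, mul_assoc, ← pow_succ]

lemma exists_semiconjBy [FiniteDimensional F D] (hij : IsSymbolPair p ζ a b i j) (hp : 0 < p)
    (hζ : IsPrimitiveRoot ζ p) (ha : a ≠ 0) (hb : b ≠ 0) (hi' : i' ^ p = algebraMap F D a) :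
    ∃ y : Dˣ, SemiconjBy (y : D) i' i := by
  obtain ⟨k, x, hx0, hx⟩ := exists_mul_eq_smul_mul hp hζ ha hij.left_pow hi'
  have hy0 : j ^ k * x ≠ 0 := mul_ne_zero (pow_ne_zero _ (hij.right_ne_zero hp.ne' hb)) hx0
  refine ⟨Units.mk0 _ hy0, smul_right_injective D (pow_ne_zero k (hζ.ne_zero hp.ne')) ?_⟩
  change ζ ^ k • (j ^ k * x * i') = ζ ^ k • (i * (j ^ k * x))
  rw [mul_assoc, ← mul_smul_comm, ← hx, ← mul_assoc, hij.right_pow_mul_left, smul_mul_assoc,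
    mul_assoc]

lemma isKummerNorm_div_of_same_left (hij : IsSymbolPair p ζ a b i j)
    (hij' : IsSymbolPair p ζ a b' i j') (hp : p ≠ 0) (hζ : ζ ≠ 0) (hb : b ≠ 0)
    (hirr : Irreducible (X ^ p - C a : F[X]))
    (hcomm : ∀ d, Commute d i → ∃ P : F[X], aeval i P = d) : IsKummerNorm p ζ a (b' / b) := by
  have hj0 := hij.right_ne_zero hp hb
  have hinv : j⁻¹ * i = ζ⁻¹ • (i * j⁻¹) := by
    rw [eq_inv_smul_iff₀ hζ, eq_mul_inv_iff_mul_eq₀ hj0, smul_mul_assoc, mul_assoc,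
      ← mul_smul_comm, ← hij.right_mul_left, inv_mul_cancel_left₀ hj0]
  obtain ⟨P, hP⟩ := hcomm (j' * j⁻¹) <| by
    rw [Commute, SemiconjBy, mul_assoc, hinv, mul_smul_comm, ← mul_assoc, hij'.right_mul_left,
      smul_mul_assoc, inv_smul_smul₀ hζ, mul_assoc]
  have hj' : j' = aeval i P * j := by rw [hP, inv_mul_cancel_right₀ hj0]
  have hnorm := hij'.right_pow
  rw [hj', aeval_mul_pow hij.right_mul_left, hij.right_pow] at hnorm
  refine ⟨P, ?_⟩
  rw [minpoly.eq_of_irreducible_of_monic hirr (x := i) (by simp [hij.left_pow])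
    (monic_X_pow_sub_C a hp)]
  apply minpoly.dvd
  rw [map_sub, aeval_C, sub_eq_zero, map_div₀, eq_div_iff (by simpa using hb), hnorm]

lemma isKummerNorm_div [FiniteDimensional F D] (hij : IsSymbolPair p ζ a b i j)
    (hij' : IsSymbolPair p ζ a b' i' j') (hp : 0 < p) (hζ : IsPrimitiveRoot ζ p) (ha : a ≠ 0)
    (hb : b ≠ 0) (hirr : Irreducible (X ^ p - C a : F[X]))
    (hcomm : ∀ d, Commute d i → ∃ P : F[X], aeval i P = d) : IsKummerNorm p ζ a (b' / b) := by
  obtain ⟨y, hy⟩ := hij.exists_semiconjBy hp hζ ha hb hij'.left_pow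
  have hconj := hij'.map (MulSemiringAction.toAlgHom F D (ConjAct.toConjAct y))
  have hi : MulSemiringAction.toAlgHom F D (ConjAct.toConjAct y) i' = i := by
    simp [ConjAct.units_smul_def, hy.eq]
  rw [hi] at hconj
  exact hij.isKummerNorm_div_of_same_left hconj hp.ne' (hζ.ne_zero hp.ne') hb hirr hcomm

end IsSymbolPair

end CommonSubfield

end InfiniteGenus

namespace InfiniteGenus

/-! ### Generic solutions of norm equations -/

section CyclicNormDomain

variable {R : Type*} [CommRing R] {p : ℕ} {σ : R →+* R}

lemma cyclicNorm_iterate (hσ : ∀ x, σ^[p] x = x) (k : ℕ) (x : R) :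
    cyclicNorm p σ (σ^[k] x) = cyclicNorm p σ x := by
  induction k with
  | zero => rfl
  | succ k ih =>
    rw [Function.iterate_succ_apply', ← map_cyclicNorm p σ (fun _ => rfl), map_cyclicNorm_self hσ,
      ih]

lemma injective_of_iterate_eq (hp : p ≠ 0) (hσ : ∀ x, σ^[p] x = x) : Function.Injective σ :=
  Function.LeftInverse.injective (g := σ^[p - 1]) fun x => by
    rw [← Function.iterate_succ_apply, Nat.succ_eq_add_one, Nat.sub_one_add_one hp, hσ]

lemma isUnit_cyclicNorm {x : R} (hx : IsUnit x) : IsUnit (cyclicNorm p σ x) := by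
  obtain ⟨y, hy⟩ := hx.exists_right_inv
  refine .of_mul_eq_one (cyclicNorm p σ y) ?_
  rw [← cyclicNorm_mul, hy, cyclicNorm_of_fixed p (map_one σ), one_pow]

lemma cyclicNorm_ne_zero [IsDomain R] (hp : p ≠ 0) (hσ : ∀ x, σ^[p] x = x) {x : R} (hx : x ≠ 0) :
    cyclicNorm p σ x ≠ 0 :=
  Finset.prod_ne_zero_iff.2 fun k _ =>
    (map_ne_zero_iff (σ ^ k) (by simpa using (injective_of_iterate_eq hp hσ).iterate k)).2 hx

lemma exists_isUnit_cyclicNorm_eq_of_mul [IsDomain R] [UniqueFactorizationMonoid R] (hp : p ≠ 0)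
    (hσ : ∀ x, σ^[p] x = x) {e : R} (he : IsUnit e) {P Q : R} (hQ : Q ≠ 0)
    (h : e * cyclicNorm p σ Q = cyclicNorm p σ P) : ∃ u, IsUnit u ∧ cyclicNorm p σ u = e := by
  induction Q using UniqueFactorizationMonoid.induction_on_prime generalizing P with
  | h₁ => exact absurd rfl hQ
  | h₂ x hx =>
    obtain ⟨y, hxy⟩ := hx.exists_right_inv
    have hP : IsUnit P := isUnit_of_dvd_unit (dvd_cyclicNorm hp σ P) <| by
      rw [← h]; exact he.mul (isUnit_cyclicNorm hx)
    refine ⟨P * y, hP.mul (.of_mul_eq_one_right x hxy), ?_⟩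
    rw [cyclicNorm_mul, ← h, mul_assoc, ← cyclicNorm_mul, hxy,
      cyclicNorm_of_fixed p (map_one σ), one_pow, mul_one]
  | h₃ q π hq hπ ih =>
    have hdvd : π ∣ cyclicNorm p σ P := by
      rw [← h, cyclicNorm_mul]
      exact ((dvd_cyclicNorm hp σ π).mul_right _).mul_left _
    rw [cyclicNorm, hπ.dvd_finsetProd_iff] at hdvd
    obtain ⟨k, hk, c, hc⟩ := hdvd
    have hP : P = σ^[p - k] π * σ^[p - k] c := by
      rw [← iterate_map_mul, ← hc, ← Function.iterate_add_apply,
        Nat.sub_add_cancel (Finset.mem_range.1 hk).le, hσ]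
    refine ih hq (P := σ^[p - k] c) (mul_left_cancel₀ (cyclicNorm_ne_zero hp hσ hπ.ne_zero) ?_)
    rw [mul_left_comm, ← cyclicNorm_mul, h, hP, cyclicNorm_mul, cyclicNorm_iterate hσ]

/-- In a factorial ring a common denominator can be cancelled prime by prime, because a prime
dividing a norm divides a conjugate. -/
lemma exists_isUnit_cyclicNorm_eq [IsDomain R] [UniqueFactorizationMonoid R] {L : Type*} [Field L]
    [Algebra R L] [IsFractionRing R L] (hp : p ≠ 0) (hσ : ∀ x, σ^[p] x = x) {σL : L →+* L}
    (hσL : ∀ x, σL (algebraMap R L x) = algebraMap R L (σ x)) {e : R} (he : IsUnit e) {x : L}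
    (hx : cyclicNorm p σL x = algebraMap R L e) : ∃ u, IsUnit u ∧ cyclicNorm p σ u = e := by
  obtain ⟨P, Q, hQ, rfl⟩ := IsFractionRing.div_surjective (A := R) x
  have hQ0 := nonZeroDivisors.ne_zero hQ
  have hnorm := map_cyclicNorm p (algebraMap R L) fun x => (hσL x).symm
  refine exists_isUnit_cyclicNorm_eq_of_mul hp hσ he (P := P) hQ0
    (IsFractionRing.injective R L ?_)
  rw [map_mul, hnorm, hnorm, ← hx, ← cyclicNorm_mul,
    div_mul_cancel₀ _ ((map_ne_zero_iff _ (IsFractionRing.injective R L)).2 hQ0)]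

lemma exists_isUnit_mul_mem_closure_of_dvd [IsDomain R] [UniqueFactorizationMonoid R] {s : Set R}
    (hs : ∀ x ∈ s, Prime x) {x y : R} (hy : y ∈ Submonoid.closure s) (hxy : x ∣ y) :
    ∃ c, IsUnit c ∧ ∃ v ∈ Submonoid.closure s, x = c * v := by
  induction hy using Submonoid.closure_induction generalizing x with
  | mem π hπ =>
    obtain hx | ⟨c, hc⟩ := (hs π hπ).irreducible.dvd_iff.1 hxy
    · exact ⟨x, hx, 1, one_mem _, (mul_one x).symm⟩
    · exact ⟨c, c.isUnit, π, Submonoid.subset_closure hπ, by rw [← hc, mul_comm]⟩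
  | one => exact ⟨x, isUnit_of_dvd_one hxy, 1, one_mem _, (mul_one x).symm⟩
  | mul y₁ y₂ _ _ ih₁ ih₂ =>
    obtain ⟨x₁, x₂, h₁, h₂, rfl⟩ := exists_dvd_and_dvd_of_dvd_mul hxy
    obtain ⟨c₁, hc₁, v₁, hv₁, rfl⟩ := ih₁ h₁
    obtain ⟨c₂, hc₂, v₂, hv₂, rfl⟩ := ih₂ h₂
    exact ⟨c₁ * c₂, hc₁.mul hc₂, v₁ * v₂, mul_mem hv₁ hv₂, mul_mul_mul_comm _ _ _ _⟩

end CyclicNormDomain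

namespace GenericNorm

open MvPolynomial (C X)

variable {M T : Type*} [Field M] {p : ℕ} (γ b : T → M)

/-- The polynomial ring in which the equations `w_t ^ p - γ_t = b_t N(z_t)` are solved generically.
The variable `(t, 0)` stands for `w_t` and `(t, k)` with `k ≠ 0` for the conjugate `σ^k z_t`; the
conjugate `z_t` itself is eliminated by the equation. -/
abbrev Poly (M T : Type*) [Field M] (p : ℕ) := MvPolynomial (T × ZMod p) M

/-- The element `(w_t ^ p - γ_t) / b_t`, which is to become the norm of `z_t`. -/
noncomputable def normValue (p : ℕ) (t : T) : Poly M T p :=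
  C (b t)⁻¹ * (X (t, 0) ^ p - C (γ t))

/-- The elements inverted to make every conjugate of `z_t` a unit. -/
def denominators (p : ℕ) : Set (Poly M T p) :=
  {x | ∃ t k, k ≠ 0 ∧ x = X (t, k)} ∪ Set.range (normValue γ b p)

variable (R : Type*) [CommRing R] [Algebra (Poly M T p) R]

lemma isUnit_algebraMap_of_mem [IsLocalization (Submonoid.closure (denominators γ b p)) R]
    {x : Poly M T p} (hx : x ∈ denominators γ b p) :
    IsUnit (algebraMap (Poly M T p) R x) :=
  IsLocalization.map_units (M := Submonoid.closure (denominators γ b p)) R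
    ⟨x, Submonoid.subset_closure hx⟩

lemma isUnit_algebraMap_normValue [IsLocalization (Submonoid.closure (denominators γ b p)) R]
    (t : T) :
    IsUnit (algebraMap (Poly M T p) R (normValue γ b p t)) :=
  isUnit_algebraMap_of_mem γ b R (.inr ⟨t, rfl⟩)

variable [NeZero p]

/-- The conjugate `σ^k z_t`. -/
noncomputable def conjugate (t : T) (k : ZMod p) : R :=
  if k = 0 then algebraMap (Poly M T p) R (normValue γ b p t) *
    Ring.inverse (∏ l ∈ Finset.univ.erase 0, algebraMap (Poly M T p) R (X (t, l)))
  else algebraMap (Poly M T p) R (X (t, k))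

lemma conjugate_of_ne (t : T) {k : ZMod p} (hk : k ≠ 0) :
    conjugate γ b R t k = algebraMap (Poly M T p) R (X (t, k)) := if_neg hk

lemma prod_conjugate [IsLocalization (Submonoid.closure (denominators γ b p)) R] (t : T) :
    ∏ k : ZMod p, conjugate γ b R t k = algebraMap (Poly M T p) R (normValue γ b p t) := by
  have hunit : IsUnit (∏ l ∈ Finset.univ.erase 0, algebraMap (Poly M T p) R (X (t, l))) :=
    (IsUnit.prod_iff).2 fun k hk =>
      isUnit_algebraMap_of_mem γ b R (.inl ⟨t, k, Finset.ne_of_mem_erase hk, rfl⟩)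
  rw [← Finset.mul_prod_erase _ _ (Finset.mem_univ 0),
    Finset.prod_congr rfl fun k hk => conjugate_of_ne γ b R t (Finset.ne_of_mem_erase hk),
    conjugate, if_pos rfl, mul_assoc, Ring.inverse_mul_cancel _ hunit, mul_one]

lemma isUnit_conjugate [IsLocalization (Submonoid.closure (denominators γ b p)) R]
    (t : T) (k : ZMod p) : IsUnit (conjugate γ b R t k) := by
  refine isUnit_of_dvd_unit (Finset.dvd_prod_of_mem _ (Finset.mem_univ k)) (?_ : IsUnit _)
  rw [prod_conjugate]
  exact isUnit_algebraMap_normValue γ b R t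

variable (τ : M →+* M)

/-- The restriction of `shift` to polynomials. -/
noncomputable def shiftPoly : Poly M T p →+* R :=
  MvPolynomial.eval₂Hom ((algebraMap (Poly M T p) R).comp (C.comp τ)) fun tk =>
    if tk.2 = 0 then algebraMap (Poly M T p) R (X tk) else conjugate γ b R tk.1 (tk.2 + 1)

lemma shiftPoly_C (m : M) :
    shiftPoly γ b R τ (C m : Poly M T p) = algebraMap (Poly M T p) R (C (τ m)) := by
  rw [shiftPoly, MvPolynomial.eval₂Hom_C]; rfl

lemma shiftPoly_X_zero (t : T) :
    shiftPoly γ b R τ (X (t, (0 : ZMod p))) = algebraMap (Poly M T p) R (X (t, 0)) := by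
  rw [shiftPoly, MvPolynomial.eval₂Hom_X', if_pos rfl]

lemma shiftPoly_X (t : T) {k : ZMod p} (hk : k ≠ 0) :
    shiftPoly γ b R τ (X (t, k)) = conjugate γ b R t (k + 1) := by
  rw [shiftPoly, MvPolynomial.eval₂Hom_X', if_neg hk]

variable {γ b τ} (hγ : ∀ t, τ (γ t) = γ t) (hb : ∀ t, τ (b t) = b t)

include hγ hb in
lemma shiftPoly_normValue (t : T) : shiftPoly γ b R τ (normValue γ b p t) =
    algebraMap (Poly M T p) R (normValue γ b p t) := by
  simp only [normValue, map_mul, map_sub, map_pow, shiftPoly_C, shiftPoly_X_zero, map_inv₀ τ, hγ,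
    hb]

variable [IsLocalization (Submonoid.closure (denominators γ b p)) R]

include hγ hb in
lemma isUnit_shiftPoly (y : Submonoid.closure (denominators γ b p)) :
    IsUnit (shiftPoly γ b R τ y.1) := by
  have hle : Submonoid.closure (denominators γ b p) ≤
      (IsUnit.submonoid R).comap (shiftPoly γ b R τ) := by
    rw [Submonoid.closure_le]
    rintro _ (⟨t, k, hk, rfl⟩ | ⟨t, rfl⟩)
    · simp only [SetLike.mem_coe, Submonoid.mem_comap, shiftPoly_X γ b R τ t hk]
      exact isUnit_conjugate γ b R t _
    · simp only [SetLike.mem_coe, Submonoid.mem_comap, shiftPoly_normValue R hγ hb]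
      exact isUnit_algebraMap_normValue γ b R t
  exact hle y.2

variable (p) in
/-- The `τ`-semilinear endomorphism fixing `w_t` and permuting the conjugates of `z_t`. -/
noncomputable def shift : R →+* R :=
  IsLocalization.lift (M := Submonoid.closure (denominators γ b p)) (isUnit_shiftPoly R hγ hb)

lemma shift_algebraMap (x : Poly M T p) :
    shift p R hγ hb (algebraMap (Poly M T p) R x) = shiftPoly γ b R τ x :=
  IsLocalization.lift_eq _ _

lemma shift_algebraMap_C (m : M) : shift p R hγ hb (algebraMap (Poly M T p) R (C m)) =
    algebraMap (Poly M T p) R (C (τ m)) := by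
  rw [shift_algebraMap, shiftPoly_C]

lemma shift_normValue (t : T) : shift p R hγ hb (algebraMap (Poly M T p) R (normValue γ b p t)) =
    algebraMap (Poly M T p) R (normValue γ b p t) := by
  rw [shift_algebraMap, shiftPoly_normValue R hγ hb]

lemma shift_conjugate (t : T) (k : ZMod p) :
    shift p R hγ hb (conjugate γ b R t k) = conjugate γ b R t (k + 1) := by
  have hne {k : ZMod p} (hk : k ≠ 0) :
      shift p R hγ hb (conjugate γ b R t k) = conjugate γ b R t (k + 1) := by
    rw [conjugate_of_ne γ b R t hk, shift_algebraMap, shiftPoly_X γ b R τ t hk]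
  obtain rfl | hk := eq_or_ne k 0
  swap
  · exact hne hk
  have hprod := congrArg (shift p R hγ hb) (prod_conjugate (p := p) γ b R t)
  rw [shift_normValue, ← prod_conjugate, map_prod,
    ← Equiv.prod_comp (Equiv.addRight (1 : ZMod p)) (fun k => conjugate γ b R t k),
    ← Finset.mul_prod_erase _ _ (Finset.mem_univ 0),
    ← Finset.mul_prod_erase _ _ (Finset.mem_univ (0 : ZMod p)),
    Finset.prod_congr rfl fun k hk => hne (Finset.ne_of_mem_erase hk)] at hprod
  exact (IsUnit.prod_iff.2 fun k _ => isUnit_conjugate γ b R t (k + 1)).mul_right_cancel hprod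

lemma iterate_shift_conjugate (t : T) (n : ℕ) (k : ZMod p) :
    (shift p R hγ hb)^[n] (conjugate γ b R t k) = conjugate γ b R t (k + (n : ZMod p)) := by
  induction n with
  | zero => simp
  | succ n ih => rw [Function.iterate_succ_apply', ih, shift_conjugate, Nat.cast_succ, add_assoc]

lemma iterate_shift (hτ : ∀ m, τ^[p] m = m) (x : R) : (shift p R hγ hb)^[p] x = x := by
  have h : shift p R hγ hb ^ p = RingHom.id R := by
    refine IsLocalization.ringHom_ext (Submonoid.closure (denominators γ b p))
      (MvPolynomial.ringHom_ext (fun m => ?_) fun ⟨t, k⟩ => ?_) <;>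
      simp only [RingHom.comp_apply, RingHom.coe_pow, RingHom.id_apply]
    · have hC : Function.Semiconj (fun m => algebraMap (Poly M T p) R (C m)) τ (shift p R hγ hb) :=
        fun m => (shift_algebraMap_C R hγ hb m).symm
      rw [← (hC.iterate_right p).eq, hτ]
    · obtain rfl | hk := eq_or_ne k 0
      · exact Function.iterate_fixed (by rw [shift_algebraMap, shiftPoly_X_zero]) _
      · rw [← conjugate_of_ne γ b R t hk, iterate_shift_conjugate, CharP.cast_eq_zero, add_zero]
  rw [← RingHom.coe_pow, h, RingHom.id_apply]

lemma cyclicNorm_conjugate (hτ : ∀ m, τ^[p] m = m) (t : T) (k : ZMod p) :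
    cyclicNorm p (shift p R hγ hb) (conjugate γ b R t k) =
      algebraMap (Poly M T p) R (normValue γ b p t) := by
  have hk : conjugate γ b R t k = (shift p R hγ hb)^[k.val] (conjugate γ b R t (0 : ZMod p)) := by
    rw [iterate_shift_conjugate, zero_add, ZMod.natCast_zmod_val]
  rw [hk, cyclicNorm_iterate (iterate_shift R hγ hb hτ), ← prod_conjugate, cyclicNorm]
  simp only [iterate_shift_conjugate, zero_add]
  refine Finset.prod_bij (fun n _ => (n : ZMod p)) (fun _ _ => Finset.mem_univ _) ?_
    (fun k _ => ⟨k.val, Finset.mem_range.2 (ZMod.val_lt k), ZMod.natCast_zmod_val k⟩)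
    fun _ _ => rfl
  intro n hn m hm h
  rw [ZMod.natCast_eq_natCast_iff'] at h
  rwa [Nat.mod_eq_of_lt (Finset.mem_range.1 hn), Nat.mod_eq_of_lt (Finset.mem_range.1 hm)] at h

lemma exists_cyclicNorm_shift_algebraMap (hτ : ∀ m, τ^[p] m = m) {x : Poly M T p}
    (hx : x ∈ Submonoid.closure (denominators γ b p)) :
    ∃ y ∈ Submonoid.closure (Set.range (normValue γ b p)),
      cyclicNorm p (shift p R hγ hb) (algebraMap _ R x) = algebraMap _ R y := by
  induction hx using Submonoid.closure_induction with
  | mem x hx =>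
    rcases hx with ⟨t, k, hk, rfl⟩ | ⟨t, rfl⟩
    · refine ⟨normValue γ b p t, Submonoid.subset_closure ⟨t, rfl⟩, ?_⟩
      rw [← conjugate_of_ne γ b R t hk, cyclicNorm_conjugate R hγ hb hτ]
    · refine ⟨normValue γ b p t ^ p,
        pow_mem (Submonoid.subset_closure (Set.mem_range_self t)) p, ?_⟩
      rw [cyclicNorm_of_fixed p (shift_normValue R hγ hb t), map_pow]
  | one => exact ⟨1, one_mem _, by rw [map_one, cyclicNorm_of_fixed p (map_one _), one_pow]⟩
  | mul x₁ x₂ _ _ h₁ h₂ =>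
    obtain ⟨y₁, hy₁, h₁⟩ := h₁
    obtain ⟨y₂, hy₂, h₂⟩ := h₂
    exact ⟨y₁ * y₂, mul_mem hy₁ hy₂, by rw [map_mul, cyclicNorm_mul, h₁, h₂, map_mul]⟩

omit [NeZero p]

/-- Over the algebraic closure one can choose `w_t` such that all `normValue`s become `1`. -/
lemma eq_of_C_mul_eq_C_mul (hp : 0 < p) (hb0 : ∀ t, b t ≠ 0) {e n : M} {x y : Poly M T p}
    (hx : x ∈ Submonoid.closure (Set.range (normValue γ b p)))
    (hy : y ∈ Submonoid.closure (Set.range (normValue γ b p))) (h : C e * x = C n * y) :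
    e = n := by
  choose r hr using fun t =>
    IsAlgClosed.exists_pow_nat_eq (algebraMap M (AlgebraicClosure M) (γ t + b t)) hp
  let φ : Poly M T p →ₐ[M] AlgebraicClosure M := MvPolynomial.aeval fun tk => r tk.1
  have hφ : Submonoid.closure (Set.range (normValue γ b p)) ≤ MonoidHom.mker φ := by
    rw [Submonoid.closure_le]
    rintro _ ⟨t, rfl⟩
    change φ (C (b t)⁻¹ * (X (t, 0) ^ p - C (γ t))) = 1
    rw [map_mul, map_sub, map_pow, MvPolynomial.algHom_C, MvPolynomial.algHom_C,
      MvPolynomial.aeval_X, hr, ← map_sub, ← map_mul, add_sub_cancel_left,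
      inv_mul_cancel₀ (hb0 t), map_one]
  have h' := congrArg φ h
  rw [map_mul, map_mul, hφ hx, hφ hy, mul_one, mul_one, MvPolynomial.algHom_C,
    MvPolynomial.algHom_C] at h'
  exact (algebraMap M _).injective h'

variable (hp : p.Prime) (hb0 : ∀ t, b t ≠ 0) (hpow : ∀ t m, m ^ p ≠ γ t)
include hp hb0 hpow

lemma prime_normValue (t : T) : Prime (normValue γ b p t) := by
  have hone : Prime (Polynomial.X ^ p - Polynomial.C (γ t)) :=
    (X_pow_sub_C_irreducible_of_prime hp (hpow t)).prime
  let s : Set (T × ZMod p) := {(t, 0)}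
  have : Unique s := Set.uniqueSingleton _
  have hs : Prime (X ⟨(t, 0), rfl⟩ ^ p - C (γ t) : MvPolynomial s M) := by
    rw [← MulEquiv.prime_iff (MvPolynomial.uniqueAlgEquiv M s)]
    simpa using hone
  have hunit : IsUnit (C (b t)⁻¹ : Poly M T p) := (IsUnit.mk0 _ (inv_ne_zero (hb0 t))).map C
  refine (associated_unit_mul_left _ _ hunit).prime_iff.2 ?_
  simpa only [map_sub, map_pow, MvPolynomial.rename_X, MvPolynomial.rename_C] using
    (MvPolynomial.prime_rename_iff s).2 hs

lemma prime_of_mem_denominators {x : Poly M T p} (hx : x ∈ denominators γ b p) : Prime x := by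
  rcases hx with ⟨t, k, -, rfl⟩ | ⟨t, rfl⟩
  · exact MvPolynomial.X_prime
  · exact prime_normValue hp hb0 hpow t

lemma closure_denominators_le :
    Submonoid.closure (denominators γ b p) ≤ nonZeroDivisors (Poly M T p) :=
  Submonoid.closure_le.2 fun _ hx =>
    mem_nonZeroDivisors_of_ne_zero (prime_of_mem_denominators hp hb0 hpow hx).ne_zero

lemma exists_cyclicNorm_eq_of_isUnit [NeZero p] (hτ : ∀ m, τ^[p] m = m) {e : M} {u : R}
    (hu : IsUnit u)
    (h : cyclicNorm p (shift p R hγ hb) u = algebraMap (Poly M T p) R (C e)) :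
    ∃ m, cyclicNorm p τ m = e := by
  obtain ⟨x, s, rfl⟩ := IsLocalization.exists_mk'_eq (Submonoid.closure (denominators γ b p)) u
  have hspec := IsLocalization.mk'_spec R x s
  obtain ⟨y, hy, hxy⟩ :=
    (IsLocalization.algebraMap_isUnit_iff (Submonoid.closure (denominators γ b p))).1
      (hspec ▸ hu.mul (IsLocalization.map_units R s))
  obtain ⟨c, hc, v, hv, rfl⟩ := exists_isUnit_mul_mem_closure_of_dvd
    (fun _ => prime_of_mem_denominators hp hb0 hpow) hy hxy
  obtain ⟨m, -, rfl⟩ := MvPolynomial.isUnit_iff_eq_C_of_isReduced.1 hc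
  obtain ⟨y₁, hy₁, hs⟩ := exists_cyclicNorm_shift_algebraMap R hγ hb hτ s.2
  obtain ⟨y₂, hy₂, hv⟩ := exists_cyclicNorm_shift_algebraMap R hγ hb hτ hv
  have hm : cyclicNorm p (shift p R hγ hb) (algebraMap (Poly M T p) R (C m)) =
      algebraMap (Poly M T p) R (C (cyclicNorm p τ m)) :=
    (map_cyclicNorm p ((algebraMap (Poly M T p) R).comp C)
      (fun m => (shift_algebraMap_C R hγ hb m).symm) m).symm
  have hnorm := congrArg (cyclicNorm p (shift p R hγ hb)) hspec
  rw [cyclicNorm_mul, h, map_mul, cyclicNorm_mul, hs, hv, hm, ← map_mul, ← map_mul] at hnorm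
  exact ⟨m, (eq_of_C_mul_eq_C_mul hp.pos hb0 hy₁ hy₂
    (IsLocalization.injective R (closure_denominators_le hp hb0 hpow) hnorm)).symm⟩

end GenericNorm

open GenericNorm MvPolynomial in
theorem exists_extension_with_norms {M T : Type u} [Field M] {p : ℕ} (hp : p.Prime) {τ : M →+* M}
    (hτ : ∀ m, τ^[p] m = m) {γ b : T → M} (hγ : ∀ t, τ (γ t) = γ t) (hb : ∀ t, τ (b t) = b t)
    (hb0 : ∀ t, b t ≠ 0) (hpow : ∀ t m, m ^ p ≠ γ t) :
    ∃ (L : Type u) (_ : Field L) (f : M →+* L) (σ : L →+* L), (∀ m, σ (f m) = f (τ m)) ∧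
      (∀ x, σ^[p] x = x) ∧
      (∀ t, ∃ w z, σ w = w ∧ w ^ p - f (γ t) = f (b t) * cyclicNorm p σ z) ∧
      ∀ e, e ≠ 0 → (∃ x, cyclicNorm p σ x = f e) → ∃ m, cyclicNorm p τ m = e := by
  have : NeZero p := ⟨hp.ne_zero⟩
  let R := Localization (Submonoid.closure (denominators γ b p))
  have : IsDomain R := IsLocalization.isDomain_localization (closure_denominators_le hp hb0 hpow)
  have : UniqueFactorizationMonoid R :=
    .of_isLocalization (Submonoid.closure (denominators γ b p)) _
  have hshift := iterate_shift R hγ hb hτ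
  let j := algebraMap R (FractionRing R)
  let σ : FractionRing R →+* FractionRing R :=
    IsFractionRing.map (injective_of_iterate_eq hp.ne_zero hshift)
  have hσj : Function.Semiconj j (shift p R hγ hb) σ := fun x => (IsLocalization.map_eq _ _).symm
  refine ⟨FractionRing R, inferInstance, j.comp ((algebraMap (Poly M T p) R).comp C), σ,
    ?_, ?_, ?_, ?_⟩
  · intro m
    exact (hσj _).symm.trans (congrArg j (shift_algebraMap_C R hγ hb m))
  · have h : σ ^ p = RingHom.id _ := IsFractionRing.ringHom_ext (A := R) fun x => by
      rw [RingHom.coe_pow]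
      exact ((hσj.iterate_right p) x).symm.trans (congrArg j (hshift x))
    exact fun x => (congrFun (RingHom.coe_pow σ p) x).symm.trans (congrArg (· x) h)
  · intro t
    refine ⟨j (algebraMap (Poly M T p) R (X (t, 0))), j (conjugate γ b R t (0 : ZMod p)), ?_, ?_⟩
    · rw [← hσj, shift_algebraMap, shiftPoly_X_zero]
    · rw [← map_cyclicNorm p j hσj, cyclicNorm_conjugate R hγ hb hτ]
      simp only [RingHom.comp_apply, ← map_pow, ← map_sub, ← map_mul]
      rw [normValue, ← mul_assoc, ← C_mul, mul_inv_cancel₀ (hb0 t), C_1, one_mul]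
  · rintro e he ⟨x, hx⟩
    have heu : IsUnit (algebraMap (Poly M T p) R (C e)) := ((IsUnit.mk0 e he).map C).map _
    obtain ⟨u, hu, hue⟩ :=
      exists_isUnit_cyclicNorm_eq hp.ne_zero hshift (fun x => (hσj x).symm) heu hx
    exact exists_cyclicNorm_eq_of_isUnit R hγ hb hp hb0 hpow hτ hu hue

end InfiniteGenus

namespace InfiniteGenus

open Polynomial

section FixedField

variable {K L : Type*} [Field K] [Field L] [Algebra K L] {p : ℕ} {σ : L →ₐ[K] L}

lemma isGaloisGroup_zpowers (σ : L ≃ₐ[K] L) (hfix : ∀ x, σ x = x → ∃ c, algebraMap K L c = x) :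
    IsGaloisGroup (Subgroup.zpowers σ) K L where
  faithful := inferInstance
  commutes := inferInstance
  isInvariant := ⟨fun x hx => hfix x (hx ⟨σ, Subgroup.mem_zpowers σ⟩)⟩

lemma finrank_le_of_iterate_eq (hp : 0 < p) (hσ : ∀ x, σ^[p] x = x)
    (hfix : ∀ x, σ x = x → ∃ c, algebraMap K L c = x) :
    FiniteDimensional K L ∧ Module.finrank K L ≤ p := by
  have hsurj : Function.Surjective σ := fun x => ⟨σ^[p - 1] x, by
    rw [← Function.iterate_succ_apply' σ, Nat.succ_eq_add_one, Nat.sub_add_cancel hp, hσ]⟩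
  let σe := AlgEquiv.ofBijective σ ⟨σ.injective, hsurj⟩
  have hpow : σe ^ p = 1 := AlgEquiv.ext fun x => by rw [AlgEquiv.coe_pow]; exact hσ x
  have := isGaloisGroup_zpowers σe hfix
  have : Finite (Subgroup.zpowers σe) :=
    (isOfFinOrder_iff_pow_eq_one.2 ⟨p, hp, hpow⟩).finite_zpowers
  refine ⟨IsGaloisGroup.finiteDimensional (Subgroup.zpowers σe) K L, ?_⟩
  rw [← IsGaloisGroup.card_eq_finrank (Subgroup.zpowers σe), Nat.card_zpowers]
  exact orderOf_le_of_pow_eq_one hp hpow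

variable {ζ a : K} {A : L}

lemma irreducible_X_pow_sub_C_of_eq_smul (hp : p.Prime) (hζ : IsPrimitiveRoot ζ p) (hA : A ≠ 0)
    (hσA : σ A = ζ • A) (hAp : A ^ p = algebraMap K L a) : Irreducible (X ^ p - C a) := by
  refine X_pow_sub_C_irreducible_of_prime hp fun r hr => ?_
  have hr0 : algebraMap K L r ≠ 0 := by
    rintro h
    rw [← hr, map_pow, h] at hAp
    exact hA (pow_eq_zero_iff hp.ne_zero |>.1 (hAp.trans (zero_pow hp.ne_zero)))
  have : NeZero p := ⟨hp.ne_zero⟩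
  obtain ⟨i, -, hi⟩ := (hζ.map_of_injective (algebraMap K L).injective).eq_pow_of_pow_eq_one
    (ξ := A / algebraMap K L r) (by
      rw [div_pow, hAp, ← map_pow, hr, div_self (by rw [← hr, map_pow]; exact pow_ne_zero _ hr0)])
  have hA' : A = algebraMap K L (ζ ^ i * r) := by
    rw [map_mul, map_pow, hi, div_mul_cancel₀ _ hr0]
  have hζ1 : (ζ - 1) • A = 0 := by rw [sub_smul, ← hσA, hA', AlgHom.commutes, one_smul, sub_self]
  exact hζ.ne_one hp.one_lt (sub_eq_zero.1 ((smul_eq_zero.1 hζ1).resolve_right hA))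

theorem isKummerNorm_iff_exists_cyclicNorm_eq (hp : p.Prime) (hζ : IsPrimitiveRoot ζ p)
    (hσ : ∀ x, σ^[p] x = x) (hfix : ∀ x, σ x = x → ∃ c, algebraMap K L c = x) (hA : A ≠ 0)
    (hσA : σ A = ζ • A) (hAp : A ^ p = algebraMap K L a) {e : K} :
    IsKummerNorm p ζ a e ↔ ∃ x : L, cyclicNorm p σ x = algebraMap K L e := by
  refine ⟨fun h => h.exists_cyclicNorm_eq σ hAp hσA, fun ⟨x, hx⟩ => ?_⟩
  have hmin : minpoly K A = X ^ p - C a :=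
    (minpoly.eq_of_irreducible_of_monic (irreducible_X_pow_sub_C_of_eq_smul hp hζ hA hσA hAp)
      (by simp [hAp]) (monic_X_pow_sub_C _ hp.ne_zero)).symm
  obtain ⟨_, hle⟩ := finrank_le_of_iterate_eq hp.pos hσ hfix
  have htop : IntermediateField.adjoin K {A} = ⊤ := by
    rw [Field.primitive_element_iff_minpoly_natDegree_eq, hmin, natDegree_X_pow_sub_C]
    refine le_antisymm ?_ hle
    simpa [hmin] using minpoly.natDegree_le (A := K) A
  obtain ⟨P, rfl⟩ : ∃ P : K[X], aeval A P = x := by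
    have h : x ∈ (IntermediateField.adjoin K {A}).toSubalgebra := by rw [htop]; trivial
    rwa [IntermediateField.adjoin_simple_toSubalgebra_of_isAlgebraic (.of_finite K A),
      Algebra.adjoin_singleton_eq_range_aeval] at h
  refine ⟨P, hmin ▸ minpoly.dvd K A ?_⟩
  rw [map_sub, aeval_C, ← hx, sub_eq_zero]
  refine map_cyclicNorm p (aeval A) (fun Q => ?_) P
  rw [aeval_twist, ← hσA, aeval_algHom_apply]

end FixedField

theorem exists_kummer_extension_with_norms {F M T : Type u} [Field F] [Field M] [Algebra F M]
    {p : ℕ} (hp : p.Prime) {ζ a : F} (hζ : IsPrimitiveRoot ζ p) {τ : M →ₐ[F] M}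
    (hτ : ∀ m, τ^[p] m = m) {A : M} (hA : A ≠ 0) (hτA : τ A = ζ • A)
    (hAp : A ^ p = algebraMap F M a) {b c : T → F} (hb : ∀ t, b t ≠ 0)
    (hc : ∀ t m, m ^ p ≠ algebraMap F M (c t)) :
    ∃ (K : Type u) (_ : Field K) (g : F →+* K),
      (∀ e, e ≠ 0 → IsKummerNorm p (g ζ) (g a) (g e) →
        ∃ m, cyclicNorm p τ m = algebraMap F M e) ∧
      ∀ t, ∃ w n, IsKummerNorm p (g ζ) (g a) n ∧ w ^ p - g (c t) = g (b t) * n := by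
  obtain ⟨L, _, f, σ, hσf, hσ, hsol, hnorm⟩ := exists_extension_with_norms (T := T) hp
    (τ := (τ : M →+* M)) hτ (fun t => τ.commutes (c t)) (fun t => τ.commutes (b t))
    (fun t => (_root_.map_ne_zero _).2 (hb t)) hc
  let K := RingHom.eqLocusField σ (RingHom.id L)
  let σK : L →ₐ[K] L := { σ with commutes' := fun x => x.2 }
  let g : F →+* K := (f.comp (algebraMap F M)).codRestrict K fun x =>
    (hσf _).trans (congrArg f (τ.commutes x))
  have hfix (x : L) (hx : σ x = x) : ∃ c : K, algebraMap K L c = x := ⟨⟨x, hx⟩, rfl⟩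
  have hiff {e : K} : IsKummerNorm p (g ζ) (g a) e ↔
      ∃ x, cyclicNorm p σ x = algebraMap K L e :=
    isKummerNorm_iff_exists_cyclicNorm_eq (σ := σK) hp (hζ.map_of_injective g.injective) hσ hfix
      (A := f A) ((_root_.map_ne_zero f).2 hA)
      ((hσf A).trans <| by
        rw [Algebra.smul_def, AlgHom.coe_toRingHom, hτA, Algebra.smul_def, map_mul]; rfl)
      (by rw [← map_pow, hAp]; rfl)
  refine ⟨K, inferInstance, g, fun e he h => ?_, fun t => ?_⟩
  · obtain ⟨x, hx⟩ := hiff.1 h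
    exact hnorm _ ((_root_.map_ne_zero _).2 he) ⟨x, hx⟩
  · obtain ⟨w, z, hw, h⟩ := hsol t
    obtain ⟨n, hn⟩ := hfix (cyclicNorm p σ z) (map_cyclicNorm_self hσ z)
    exact ⟨⟨w, hw⟩, n, hiff.2 ⟨z, hn.symm⟩, Subtype.ext (h.trans (by rw [← hn]; rfl))⟩

/-- The embedding `g : F →+* K` creates no new norms from the Kummer algebra `F[X]/(X^p - a)`. -/
def ReflectsKummerNorms {F K : Type*} [CommRing F] [CommRing K] (p : ℕ) (ζ a : F)
    (g : F →+* K) : Prop :=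
  ∀ e, IsKummerNorm p (g ζ) (g a) (g e) → IsKummerNorm p ζ a e

lemma ReflectsKummerNorms.comp {F K L : Type*} [CommRing F] [CommRing K] [CommRing L] {p : ℕ}
    {ζ a : F} {g : F →+* K} {g' : K →+* L} (hg' : ReflectsKummerNorms p (g ζ) (g a) g')
    (hg : ReflectsKummerNorms p ζ a g) : ReflectsKummerNorms p ζ a (g'.comp g) :=
  fun e h => hg e (hg' (g e) h)

theorem exists_extension_hasSymbolRoot {F : Type u} [Field F] {p : ℕ} (hp : p.Prime) {ζ a e₀ : F}
    (hζ : IsPrimitiveRoot ζ p) (ha : a ≠ 0) (he₀ : ¬IsKummerNorm p ζ a e₀) :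
    ∃ (K : Type u) (_ : Field K) (g : F →+* K),
      ReflectsKummerNorms p ζ a g ∧ ∀ b c, b ≠ 0 → HasSymbolRoot p (g ζ) (g a) (g b) (g c) := by
  have hfact : Fact (Irreducible (X ^ p - C a)) := ⟨irreducible_of_not_isKummerNorm hp hζ ha he₀⟩
  let M := KummerAlgebra p a
  let τ := KummerAlgebra.rotate a hζ.pow_eq_one
  let T := {bc : F × F // bc.1 ≠ 0 ∧ ∀ m : M, m ^ p ≠ algebraMap F M (bc.2 / a)}
  have hroot : KummerAlgebra.root p a ^ p = algebraMap F M a := KummerAlgebra.root_pow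
  obtain ⟨K, _, g, hnorm, hsol⟩ := exists_kummer_extension_with_norms (T := T) hp hζ (τ := τ)
    (KummerAlgebra.iterate_rotate hζ.pow_eq_one)
    (KummerAlgebra.isUnit_root hp.ne_zero (IsUnit.mk0 a ha)).ne_zero
    (KummerAlgebra.rotate_root hζ.pow_eq_one) hroot (fun t => t.2.1) (fun t => t.2.2)
  refine ⟨K, inferInstance, g, fun e h => ?_, fun b c hb => ?_⟩
  · obtain rfl | he := eq_or_ne e 0
    · simpa [zero_pow hp.ne_zero] using isKummerNorm_pow (p := p) (ζ := ζ) (a := a) 0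
    · exact (KummerAlgebra.isKummerNorm_iff hζ.pow_eq_one).2 (hnorm e he h)
  · by_cases hbc : ∀ m : M, m ^ p ≠ algebraMap F M (c / a)
    · obtain ⟨w, n, hn, h⟩ := hsol ⟨(b, c), hb, hbc⟩
      refine .inr ⟨w, n, hn, ?_⟩
      rw [← h, sub_sub_cancel, ← map_mul, mul_div_cancel₀ _ ha]
    · push Not at hbc
      obtain ⟨m, hm⟩ := hbc
      obtain ⟨P, hP⟩ := AdjoinRoot.mk_surjective (KummerAlgebra.root p a * m)
      refine HasSymbolRoot.map g (.inl ⟨P, ?_⟩)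
      rw [← AdjoinRoot.mk_eq_zero, map_sub, map_pow, hP, mul_pow, hroot, hm, ← map_mul,
        mul_div_cancel₀ _ ha]
      exact sub_self _

/-! ### Extensions of degree prime to `p` -/

section NormDescent

variable {E E' M : Type*} [CommRing E] [CommRing E'] [CommRing M] [Algebra E E'] [Algebra E M]
  {ι : Type*} [Fintype ι] [DecidableEq ι]

/-- Evaluation at `x : M` of polynomials with coefficients in a free `E`-algebra `E'`, the
coefficients acting on the basis `B` by multiplication. This represents the map
`E'[X] → M ⊗ E'` by matrices over `M`. -/
noncomputable def matrixEval (B : Module.Basis ι E E') (x : M) : E'[X] →+* Matrix ι ι M :=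
  eval₂RingHom' ((algebraMap E M).mapMatrix.comp (Algebra.leftMulMatrix B).toRingHom)
    (Matrix.scalar ι x) fun _ => (Matrix.scalar_commute x (Commute.all x) _).symm

variable (B : Module.Basis ι E E') {x : M}

lemma matrixEval_C (c : E') :
    matrixEval B x (C c) = (Algebra.leftMulMatrix B c).map (algebraMap E M) :=
  eval₂_C _ _

lemma matrixEval_X : matrixEval B x X = Matrix.scalar ι x := eval₂_X _ _

lemma matrixEval_C_algebraMap (c : E) :
    matrixEval B x (C (algebraMap E E' c)) = Matrix.scalar ι (algebraMap E M c) := by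
  rw [matrixEval_C, AlgHom.commutes, Matrix.algebraMap_eq_diagonal,
    Matrix.diagonal_map (map_zero _)]
  rfl

lemma map_matrixEval {σ : M →ₐ[E] M} {ζ : E} (hσ : σ x = ζ • x) (P : E'[X]) :
    σ.mapMatrix (matrixEval B x P) = matrixEval B x (twist (algebraMap E E' ζ) P) := by
  have h : (σ.mapMatrix (m := ι) : Matrix ι ι M →+* Matrix ι ι M).comp (matrixEval B x) =
      (matrixEval B x).comp (twist (algebraMap E E' ζ)).toRingHom := by
    refine ringHom_ext (fun c => ?_) ?_
    · ext i j
      simp [matrixEval_C]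
    · simp [matrixEval_X, matrixEval_C_algebraMap, hσ, Algebra.smul_def]
  exact congrArg (· P) h

lemma exists_cyclicNorm_eq_pow_finrank [Nontrivial E] [Module.Free E E'] [Module.Finite E E']
    {p : ℕ} {ζ a e : E} {x : M} (hx : x ^ p = algebraMap E M a) {σ : M →ₐ[E] M}
    (hσ : σ x = ζ • x)
    (h : IsKummerNorm p (algebraMap E E' ζ) (algebraMap E E' a) (algebraMap E E' e)) :
    ∃ y : M, cyclicNorm p σ y = algebraMap E M (e ^ Module.finrank E E') := by
  obtain ⟨P, hP⟩ := h
  let B := Module.Free.chooseBasis E E'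
  let detEval : E'[X] →* M := Matrix.detMonoidHom.comp (matrixEval B x).toMonoidHom
  have hdet (Q : E'[X]) : detEval Q = (matrixEval B x Q).det := rfl
  have hsemiconj (Q : E'[X]) : detEval (twist (algebraMap E E' ζ) Q) = σ (detEval Q) := by
    rw [hdet, hdet, AlgHom.map_det, map_matrixEval B hσ]
  have hker : matrixEval B x (X ^ p - C (algebraMap E E' a)) = 0 := by
    rw [map_sub, map_pow, matrixEval_X, matrixEval_C_algebraMap, ← map_pow, hx, sub_self]
  have heval : matrixEval B x (cyclicNorm p (twist (algebraMap E E' ζ)) P) =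
      Matrix.scalar _ (algebraMap E M e) := by
    rw [← matrixEval_C_algebraMap B, ← sub_eq_zero, ← map_sub]
    exact zero_dvd_iff.1 (hker ▸ map_dvd (matrixEval B x) hP)
  refine ⟨detEval P, ?_⟩
  rw [← map_cyclicNorm p detEval hsemiconj, hdet, heval, Matrix.scalar_apply, Matrix.det_diagonal,
    Finset.prod_const, Finset.card_univ, map_pow, Module.finrank_eq_card_chooseBasisIndex]

end NormDescent

theorem IsKummerNorm.of_map_of_finrank_coprime {E E' : Type*} [Field E] [Field E'] [Algebra E E']
    [FiniteDimensional E E'] {p : ℕ} (hp : 1 < p) {ζ a e : E} (hζ : ζ ^ p = 1)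
    (hd : (Module.finrank E E').Coprime p)
    (h : IsKummerNorm p (algebraMap E E' ζ) (algebraMap E E' a) (algebraMap E E' e)) :
    IsKummerNorm p ζ a e :=
  .of_pow_of_coprime hp hd <| (KummerAlgebra.isKummerNorm_iff hζ).2 <|
    exists_cyclicNorm_eq_pow_finrank KummerAlgebra.root_pow (KummerAlgebra.rotate_root hζ) h

lemma isKummerNorm_iff_exists_lifts {E L : Type*} [Field E] [Field L] (f : E →+* L) {p : ℕ}
    (hp : p ≠ 0) {ζ a e : E} : IsKummerNorm p ζ a e ↔
      ∃ P ∈ lifts f, X ^ p - C (f a) ∣ cyclicNorm p (twist (f ζ)) P - C (f e) := by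
  have hmap (P : E[X]) : X ^ p - C (f a) ∣ cyclicNorm p (twist (f ζ)) (P.map f) - C (f e) ↔
      X ^ p - C a ∣ cyclicNorm p (twist ζ) P - C e := by
    rw [← Polynomial.map_dvd_map f f.injective (monic_X_pow_sub_C a hp)]
    simp [map_cyclicNorm_twist]
  refine ⟨fun ⟨P, hP⟩ => ⟨P.map f, ⟨P, rfl⟩, (hmap P).2 hP⟩, ?_⟩
  rintro ⟨_, ⟨P, rfl⟩, h⟩
  exact ⟨P, (hmap P).1 h⟩

/-- The field `K` is `p`-special: its only simple algebraic extension of degree prime to `p` is `K`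
itself. -/
def IsPSpecial (p : ℕ) (K : Type*) [Field K] : Prop :=
  ∀ h : K[X], Irreducible h → h.natDegree.Coprime p → h.natDegree = 1

section PrimeToPClosure

variable {F Ω : Type*} [Field F] [Field Ω] [Algebra F Ω] {p : ℕ} {ζ a : F}

lemma reflectsKummerNorms_sSup (hp : p ≠ 0) {c : Set (IntermediateField F Ω)} (hne : c.Nonempty)
    (hchain : IsChain (· ≤ ·) c)
    (hc : ∀ E ∈ c, ReflectsKummerNorms p ζ a (algebraMap F E)) :
    ReflectsKummerNorms p ζ a (algebraMap F (sSup c : IntermediateField F Ω)) := by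
  intro e h
  have := hne.to_subtype
  obtain ⟨P, hP, hdvd⟩ := (isKummerNorm_iff_exists_lifts (algebraMap _ Ω) hp).1 h
  have hcoeffs : (P.coeffs : Set Ω) ⊆ ⋃ E : c, (E : IntermediateField F Ω) := by
    rw [← IntermediateField.coe_iSup_of_directed hchain.directed, ← sSup_eq_iSup']
    exact ((lifts_iff_coeffs_subset_range _).1 hP).trans_eq Subtype.range_coe
  obtain ⟨E, hE⟩ :=
    Directed.exists_mem_subset_of_finset_subset_biUnion hchain.directed hcoeffs
  refine hc E E.2 e ((isKummerNorm_iff_exists_lifts (algebraMap E.1 Ω) hp).2 ⟨P, ?_, hdvd⟩)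
  exact (lifts_iff_coeffs_subset_range _).2 (hE.trans_eq Subtype.range_coe.symm)

lemma exists_maximal_reflectsKummerNorms (hp : p ≠ 0) :
    ∃ E : IntermediateField F Ω,
      Maximal (fun E : IntermediateField F Ω => ReflectsKummerNorms p ζ a (algebraMap F E)) E := by
  obtain ⟨E, -, hE⟩ := zorn_le_nonempty₀
    {E : IntermediateField F Ω | ReflectsKummerNorms p ζ a (algebraMap F E)}
    (fun c hc hchain y hy => ⟨sSup c, reflectsKummerNorms_sSup hp ⟨y, hy⟩ hchain hc,
      fun z hz => le_sSup hz⟩) ⊥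
    (fun e h => by simpa using h.map (IntermediateField.botEquiv F Ω : _ →+* F))
  exact ⟨E, hE⟩

end PrimeToPClosure

theorem exists_isPSpecial_extension {F : Type u} [Field F] {p : ℕ} (hp : 1 < p) {ζ a : F}
    (hζ : ζ ^ p = 1) :
    ∃ (K : Type u) (_ : Field K) (g : F →+* K), ReflectsKummerNorms p ζ a g ∧ IsPSpecial p K := by
  obtain ⟨E, hE⟩ := exists_maximal_reflectsKummerNorms (F := F) (Ω := AlgebraicClosure F)
    (p := p) (ζ := ζ) (a := a) (by lia)
  refine ⟨E, inferInstance, algebraMap F E, hE.prop, fun h hirr hcop => ?_⟩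
  obtain ⟨y, hy⟩ := IsAlgClosed.exists_aeval_eq_zero (AlgebraicClosure F) h hirr.degree_pos.ne'
  have hint : IsIntegral E y := Algebra.IsIntegral.isIntegral y
  have hdeg : h.natDegree = (minpoly E y).natDegree := by
    rw [← minpoly.eq_of_irreducible hirr hy, natDegree_mul_C]
    exact inv_ne_zero (leadingCoeff_ne_zero.2 hirr.ne_zero)
  have := IntermediateField.adjoin.finiteDimensional hint
  let E' := (IntermediateField.adjoin E {y}).restrictScalars F
  have hreflects : ReflectsKummerNorms p ζ a (algebraMap F E') := by
    refine ReflectsKummerNorms.comp (g := algebraMap F E)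
      (g' := algebraMap E (IntermediateField.adjoin E {y})) (fun e he => ?_) hE.prop
    refine he.of_map_of_finrank_coprime hp (by rw [← map_pow, hζ, map_one]) ?_
    rwa [IntermediateField.adjoin.finrank hint, ← hdeg]
  have hle : E ≤ E' := fun x hx => (IntermediateField.adjoin E {y}).algebraMap_mem ⟨x, hx⟩
  have hyE : y ∈ E := hE.le_of_ge hreflects hle (IntermediateField.mem_adjoin_simple_self E y)
  rw [hdeg, minpoly.natDegree_eq_one_iff]
  exact ⟨⟨y, hyE⟩, rfl⟩

/-! ### The tower -/

lemma irreducible_of_irreducible_map {K L : Type*} [Field K] [Field L] (f : K →+* L) {h : K[X]}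
    (hh : Irreducible (h.map f)) : Irreducible h := by
  have : IsLocalHom (mapRingHom f) := ⟨fun q hq => by
    rwa [coe_mapRingHom, isUnit_iff_degree_eq_zero, degree_map, ← isUnit_iff_degree_eq_zero] at hq⟩
  exact Irreducible.of_map (f := mapRingHom f) hh

theorem exists_field_colimit (G : ℕ → Type u) [∀ n, Field (G n)] (s : ∀ n, G n →+* G (n + 1)) :
    ∃ (K : Type u) (_ : Field K) (ι : ∀ n, G n →+* K),
      (∀ n, (ι (n + 1)).comp (s n) = ι n) ∧ ∀ q : K[X], ∃ n P, map (ι n) P = q := by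
  let f (i j : ℕ) (h : i ≤ j) : G i →+* G j :=
    Nat.leRecOn (C := fun k => G i →+* G k) h (fun {k} g => (s k).comp g) (RingHom.id _)
  have hself (i : ℕ) (h : i ≤ i) : f i i h = RingHom.id _ := Nat.leRecOn_self _
  have hsucc (i j : ℕ) (h : i ≤ j) (h' : i ≤ j + 1) : f i (j + 1) h' = (s j).comp (f i j h) :=
    Nat.leRecOn_succ h _
  have hsystem : DirectedSystem G (fun i j h => f i j h) := by
    refine ⟨fun i x => by rw [hself]; rfl, fun k j i hij hjk x => ?_⟩
    induction k, hjk using Nat.le_induction with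
    | base => rw [hself]; rfl
    | succ k hjk ih =>
      rw [hsucc j k hjk, hsucc i k (hij.trans hjk), RingHom.comp_apply, RingHom.comp_apply, ih]
  let := Field.DirectLimit.field G f
  refine ⟨Ring.DirectLimit G (fun i j h => f i j h), this, Ring.DirectLimit.of G _,
    fun n => RingHom.ext fun x => ?_, Ring.DirectLimit.Polynomial.exists_of⟩
  have hof := Ring.DirectLimit.of_f (G := G) (f := fun i j h => f i j h) (Nat.le_succ n) x
  rw [← hof, hsucc n n le_rfl, hself]
  rfl

/-- A stage of the tower of extensions of `F`: a field with an embedding of `F` that creates no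
new norms from `F[X]/(X^p - a)`. -/
structure NormReflectingExtension {F : Type u} [Field F] (p : ℕ) (ζ a : F) : Type (u + 1) where
  carrier : Type u
  [field : Field carrier]
  map : F →+* carrier
  reflects : ReflectsKummerNorms p ζ a map

namespace NormReflectingExtension

attribute [instance] field

variable {F : Type u} [Field F] {p : ℕ} {ζ a e₀ : F}

lemma exists_next (hp : p.Prime) (hζ : IsPrimitiveRoot ζ p) (ha : a ≠ 0)
    (he₀ : ¬IsKummerNorm p ζ a e₀) (E : NormReflectingExtension p ζ a) :
    ∃ (E' : NormReflectingExtension p ζ a) (g : E.carrier →+* E'.carrier),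
      g.comp E.map = E'.map ∧
      (∀ h : E.carrier[X], Irreducible (h.map g) → h.natDegree.Coprime p → h.natDegree = 1) ∧
      ∀ b c, b ≠ 0 → HasSymbolRoot p (E'.map ζ) (E'.map a) (g b) (g c) := by
  have hζE := hζ.map_of_injective E.map.injective
  obtain ⟨E₁, _, g₁, hg₁, hspecial⟩ :=
    exists_isPSpecial_extension hp.one_lt (a := E.map a) hζE.pow_eq_one
  obtain ⟨E₂, _, g₂, hg₂, hsol⟩ := exists_extension_hasSymbolRoot hp
    (hζE.map_of_injective g₁.injective)
    ((_root_.map_ne_zero g₁).2 ((_root_.map_ne_zero E.map).2 ha))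
    (fun h => he₀ (E.reflects _ (hg₁ _ h)))
  refine ⟨⟨E₂, (g₂.comp g₁).comp E.map, (hg₂.comp hg₁).comp E.reflects⟩, g₂.comp g₁, rfl,
    fun h hirr hcop => ?_, fun b c hb => hsol _ _ ((_root_.map_ne_zero g₁).2 hb)⟩
  rw [← Polynomial.map_map] at hirr
  have := hspecial _ (irreducible_of_irreducible_map g₂ hirr) (by rwa [natDegree_map])
  rwa [natDegree_map] at this

end NormReflectingExtension

theorem exists_isPSpecial_extension_hasSymbolRoot {F : Type u} [Field F] {p : ℕ} (hp : p.Prime)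
    {ζ a e₀ : F} (hζ : IsPrimitiveRoot ζ p) (ha : a ≠ 0) (he₀ : ¬IsKummerNorm p ζ a e₀) :
    ∃ (K : Type u) (_ : Field K) (g : F →+* K), ReflectsKummerNorms p ζ a g ∧ IsPSpecial p K ∧
      ∀ b c, b ≠ 0 → HasSymbolRoot p (g ζ) (g a) b c := by
  choose next g hg hspecial hsol using NormReflectingExtension.exists_next hp hζ ha he₀
  let E (n : ℕ) : NormReflectingExtension.{u} p ζ a :=
    n.rec (motive := fun _ => NormReflectingExtension p ζ a) ⟨F, RingHom.id F, fun _ h => h⟩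
      fun _ => next
  let s (n : ℕ) : (E n).carrier →+* (E (n + 1)).carrier := g (E n)
  obtain ⟨K, _, ι, hι, hpoly⟩ := exists_field_colimit _ s
  have hmap (n : ℕ) : (ι n).comp (E n).map = ι 0 := by
    induction n with
    | zero => rfl
    | succ n ih => rw [← ih, ← hι n, RingHom.comp_assoc]; exact congrArg _ (hg (E n)).symm
  refine ⟨K, inferInstance, ι 0, ?_, fun h hirr hcop => ?_, fun b c hb => ?_⟩
  · rintro e ⟨P, hP⟩
    obtain ⟨n, Q, rfl⟩ := hpoly P
    refine (E n).reflects e ((isKummerNorm_iff_exists_lifts (ι n) hp.ne_zero).2 ⟨_, ⟨Q, rfl⟩, ?_⟩)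
    have happly (x : F) : ι n ((E n).map x) = ι 0 x := congrArg (· x) (hmap n)
    rwa [happly, happly, happly]
  · obtain ⟨n, Q, rfl⟩ := hpoly h
    rw [natDegree_map] at hcop ⊢
    refine hspecial (E n) Q ?_ hcop
    rw [← hι, ← Polynomial.map_map] at hirr
    exact irreducible_of_irreducible_map _ hirr
  · obtain ⟨n, Q, hQ⟩ := hpoly (C b + C c * X)
    obtain rfl : ι n (Q.coeff 0) = b := by simpa using congrArg (coeff · 0) hQ
    obtain rfl : ι n (Q.coeff 1) = c := by simpa using congrArg (coeff · 1) hQ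
    have hroot := (hsol (E n) (Q.coeff 0) (Q.coeff 1) (by rintro h; simp [h] at hb)).map (ι (n + 1))
    rw [← hmap (n + 1), ← hι n]
    exact hroot

/-! ### The base field -/

theorem exists_extension_isKummerNorm_imp_pow {F : Type u} [Field F] {p : ℕ} (hp : p ≠ 0) {ζ : F}
    (hζ : ζ ^ p = 1) :
    ∃ (K : Type u) (_ : Field K) (g : F →+* K) (a : K), a ≠ 0 ∧
      ∀ e, e ≠ 0 → IsKummerNorm p (g ζ) a (g e) → ∃ c, c ^ p = e := by
  have htwist := iterate_twist_of_pow_eq_one hζ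
  let j := algebraMap F[X] (FractionRing F[X])
  let σ : FractionRing F[X] →+* FractionRing F[X] :=
    IsFractionRing.map (j := (twist ζ).toRingHom) (injective_of_iterate_eq hp htwist)
  have hσj (P : F[X]) : σ (j P) = j (twist ζ P) := IsLocalization.map_eq _ _
  let K := RingHom.eqLocusField σ (RingHom.id _)
  let σK : FractionRing F[X] →ₐ[K] FractionRing F[X] := { σ with commutes' := fun x => x.2 }
  let g : F →+* K := (j.comp C).codRestrict K fun c => (hσj _).trans (congrArg j (twist_C c))
  have hjX : j X ≠ 0 := by simp [j]
  let a : K := ⟨j X ^ p, by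
    change σ _ = _
    rw [map_pow, hσj, twist_X, ← map_pow, mul_pow, ← C_pow, hζ, C_1, one_mul, map_pow]; rfl⟩
  refine ⟨K, inferInstance, g, a, fun h => pow_ne_zero p hjX (congrArg Subtype.val h),
    fun e he h => ?_⟩
  obtain ⟨x, hx⟩ := h.exists_cyclicNorm_eq σK (x := j X) rfl <|
    (hσj X).trans (by rw [twist_X, map_mul]; rfl)
  obtain ⟨u, hu, hue⟩ := exists_isUnit_cyclicNorm_eq hp htwist hσj ((IsUnit.mk0 e he).map C) hx
  obtain ⟨c, -, rfl⟩ := isUnit_iff.1 hu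
  exact ⟨c, C_injective <| by rw [C_pow, ← cyclicNorm_of_fixed p (twist_C (ζ := ζ) c)]; exact hue⟩

lemma rootMultiplicity_modEq_of_pow_mul_eq {k L : Type*} [CommRing k] [IsDomain k] [Field L]
    [Algebra k[X] L] [IsFractionRing k[X] L] {p : ℕ} {g h : k[X]} (hg : g ≠ 0) {c : L}
    (hc : c ^ p * algebraMap k[X] L h = algebraMap k[X] L g) (x : k) :
    rootMultiplicity x g ≡ rootMultiplicity x h [MOD p] := by
  classical
  obtain ⟨S, Q, hQ, rfl⟩ := IsFractionRing.div_surjective (A := k[X]) c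
  have hQ0 : Q ≠ 0 := nonZeroDivisors.ne_zero hQ
  have hinj := IsFractionRing.injective k[X] L
  have hmul : S ^ p * h = g * Q ^ p := hinj <| by
    rw [map_mul, map_mul, map_pow, map_pow, ← hc, div_pow]
    field_simp [(_root_.map_ne_zero_iff _ hinj).2 hQ0]
  have hmul0 : g * Q ^ p ≠ 0 := mul_ne_zero hg (pow_ne_zero _ hQ0)
  have hcount := congrArg (rootMultiplicity x) hmul
  rw [rootMultiplicity_mul (hmul ▸ hmul0), rootMultiplicity_mul hmul0, ← count_roots (S ^ p),
    ← count_roots (Q ^ p), roots_pow, roots_pow, Multiset.count_nsmul, Multiset.count_nsmul]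
    at hcount
  simpa [Nat.ModEq] using (congrArg (· % p) hcount).symm

theorem exists_infinite_family_not_isKummerNorm {p : ℕ} (hp : p.Prime) :
    ∃ (K : Type u) (_ : Field K) (ζ a : K) (b : ℕ → K), CharZero K ∧ IsPrimitiveRoot ζ p ∧
      a ≠ 0 ∧ (∀ n, b n ≠ 0) ∧ (∀ n, ¬IsKummerNorm p ζ a (b n)) ∧
      ∀ n m, n ≠ m → ¬IsKummerNorm p ζ a (b n / b m) := by
  have : NeZero p := ⟨hp.ne_zero⟩
  have : CharZero (ULift.{u} ℚ) :=
    charZero_of_injective_ringHom (f := (ULift.ringEquiv.symm : ℚ ≃+* ULift.{u} ℚ).toRingHom)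
      ULift.ringEquiv.symm.injective
  let k := CyclotomicField p (ULift.{u} ℚ)
  have : CharZero k := charZero_of_injective_algebraMap (algebraMap (ULift.{u} ℚ) k).injective
  let j := algebraMap k[X] (FractionRing k[X])
  have hj : Function.Injective j := IsFractionRing.injective _ _
  let ζ := IsCyclotomicExtension.zeta p (ULift.{u} ℚ) k
  have hζ : IsPrimitiveRoot (j (C ζ)) p :=
    ((IsCyclotomicExtension.zeta_spec p (ULift.{u} ℚ) k).map_of_injective
      C_injective).map_of_injective hj
  obtain ⟨K, _, g, a, ha, hnorm⟩ := exists_extension_isKummerNorm_imp_pow hp.ne_zero hζ.pow_eq_one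
  let β (n : ℕ) : k[X] := X - C (n : k)
  have hβ (n : ℕ) : j (β n) ≠ 0 := (_root_.map_ne_zero_iff _ hj).2 (X_sub_C_ne_zero _)
  have hnot (n : ℕ) {h : k[X]} (hh : ¬h.IsRoot n) :
      ¬IsKummerNorm p (g (j (C ζ))) a (g (j (β n) / j h)) := fun hN => by
    have hjh : j h ≠ 0 := (_root_.map_ne_zero_iff _ hj).2 (by rintro rfl; exact hh (eval_zero ..))
    obtain ⟨c, hc⟩ := hnorm _ (div_ne_zero (hβ n) hjh) hN
    have hmod := rootMultiplicity_modEq_of_pow_mul_eq (X_sub_C_ne_zero _)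
      (by rw [hc]; exact div_mul_cancel₀ _ hjh) (n : k)
    rw [rootMultiplicity_X_sub_C_self, rootMultiplicity_eq_zero hh] at hmod
    exact hp.one_lt.ne' (Nat.dvd_one.1 ((Nat.modEq_zero_iff_dvd).1 hmod))
  refine ⟨K, inferInstance, g (j (C ζ)), a, fun n => g (j (β n)), charZero_of_injective_ringHom
    (f := g.comp (j.comp C)) (g.injective.comp (hj.comp C_injective)),
    hζ.map_of_injective g.injective, ha, fun n => (_root_.map_ne_zero g).2 (hβ n),
    fun n => ?_, fun n m hnm => ?_⟩
  · simpa using hnot n (h := 1) (by simp [IsRoot])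
  · rw [← map_div₀]
    refine hnot n ?_
    rw [root_X_sub_C]
    exact_mod_cast hnm.symm

/-! ### Subfields of degree `p` -/

section PSpecial

variable {K : Type*} [Field K] {p : ℕ}

lemma IsPSpecial.isPGroup_aut (hp : p.Prime) (hK : IsPSpecial p K) (N : Type*) [Field N]
    [Algebra K N] [FiniteDimensional K N] [IsGalois K N] : IsPGroup p (N ≃ₐ[K] N) := by
  have : Fact p.Prime := ⟨hp⟩
  obtain ⟨P⟩ : Nonempty (Sylow p (N ≃ₐ[K] N)) := inferInstance
  let E := IntermediateField.fixedField (P : Subgroup (N ≃ₐ[K] N))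
  have hE : Module.finrank K E = (P : Subgroup (N ≃ₐ[K] N)).index := by
    rw [IntermediateField.finrank_eq_fixingSubgroup_index,
      IntermediateField.fixingSubgroup_fixedField]
  obtain ⟨θ, hθ⟩ := Field.exists_primitive_element K E
  have hdeg := (Field.primitive_element_iff_minpoly_natDegree_eq K θ).1 hθ
  have hindex := hK _ (minpoly.irreducible (Algebra.IsIntegral.isIntegral θ)) <| by
    rw [hdeg, hE]
    exact (hp.coprime_iff_not_dvd.2 P.not_dvd_index).symm
  rw [hdeg, hE, Subgroup.index_eq_one] at hindex
  have hP := P.isPGroup'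
  rw [hindex] at hP
  exact hP.of_equiv Subgroup.topEquiv

lemma normal_of_isPGroup_of_index_eq {G : Type*} [Group G] [Finite G] (hp : p.Prime)
    (hG : IsPGroup p G) {H : Subgroup G} (hH : H.index = p) : H.Normal := by
  have : Fact p.Prime := ⟨hp⟩
  obtain ⟨n, hn⟩ := IsPGroup.iff_card.1 hG
  have hn0 : n ≠ 0 := by
    rintro rfl
    have := H.index_dvd_card
    rw [hn, hH, pow_zero, Nat.dvd_one] at this
    exact hp.one_lt.ne' this
  apply Subgroup.normal_of_index_eq_minFac_card
  rw [hH, hn, hp.pow_minFac hn0]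

lemma IsPSpecial.isGalois_of_finrank_eq [PerfectField K] (hp : p.Prime) (hK : IsPSpecial p K)
    {L : Type*} [Field L] [Algebra K L] (hL : Module.finrank K L = p) : IsGalois K L := by
  have : FiniteDimensional K L := Module.finite_of_finrank_pos (hL ▸ hp.pos)
  have : Normal K (AlgebraicClosure L) :=
    have : IsAlgClosure K (AlgebraicClosure L) :=
      ⟨inferInstance, Algebra.IsAlgebraic.trans K L _⟩
    IsAlgClosure.normal K _
  let N := IntermediateField.normalClosure K L (AlgebraicClosure L)
  have : FiniteDimensional K N := normalClosure.is_finiteDimensional K L _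
  have : IsGalois K N := { }
  let L' := (IsScalarTower.toAlgHom K L N).fieldRange
  let e : L ≃ₐ[K] L' := AlgEquiv.ofInjectiveField _
  have hindex : L'.fixingSubgroup.index = p := by
    rw [← IntermediateField.finrank_eq_fixingSubgroup_index, ← e.toLinearEquiv.finrank_eq, hL]
  have := normal_of_isPGroup_of_index_eq hp (hK.isPGroup_aut hp N) hindex
  have := IsGalois.of_fixedField_normal_subgroup L'.fixingSubgroup
  rw [IsGalois.fixedField_fixingSubgroup] at this
  exact IsGalois.of_algEquiv e.symm

end PSpecial

lemma nonempty_algHom_of_pow_eq {K L : Type*} [Field K] [Field L] [Algebra K L]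
    [FiniteDimensional K L] [IsGalois K L] [IsCyclic (L ≃ₐ[K] L)] {ζ : K}
    (hζ : IsPrimitiveRoot ζ (Module.finrank K L)) {D : Type*} [Ring D] [Algebra K D]
    (hD : ∀ c : K, ∃ u : D, u ^ Module.finrank K L = algebraMap K D c) :
    Nonempty (L →ₐ[K] D) := by
  obtain ⟨γ, ⟨c, hc⟩, htop⟩ := exists_root_adjoin_eq_top_of_isCyclic K L
    ⟨ζ, (mem_primitiveRoots Module.finrank_pos).2 hζ⟩
  obtain ⟨u, hu⟩ := hD c
  have hint : IsIntegral K γ := Algebra.IsIntegral.isIntegral γ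
  have hmin : minpoly K γ = X ^ Module.finrank K L - C c :=
    (minpoly.eq_of_irreducible_of_monic (irreducible_X_pow_sub_C_of_root_adjoin_eq_top hc.symm htop)
      (by simp [hc]) (monic_X_pow_sub_C c Module.finrank_pos.ne')).symm
  let pb := (IntermediateField.adjoin.powerBasis hint).map
    ((IntermediateField.equivOfEq htop).trans IntermediateField.topEquiv)
  have hgen : pb.gen = γ := by simp [pb]
  exact ⟨pb.lift u (by rw [hgen, hmin]; simp [hu])⟩

lemma IsPSpecial.nonempty_algHom {K : Type*} [Field K] [PerfectField K] {p : ℕ}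
    (hK : IsPSpecial p K) (hp : p.Prime) {ζ : K} (hζ : IsPrimitiveRoot ζ p) {L : Type*} [Field L]
    [Algebra K L] (hL : Module.finrank K L = p) {D : Type*} [Ring D] [Algebra K D]
    (hD : ∀ c : K, ∃ u : D, u ^ p = algebraMap K D c) : Nonempty (L →ₐ[K] D) := by
  have : FiniteDimensional K L := Module.finite_of_finrank_pos (hL ▸ hp.pos)
  have := hK.isGalois_of_finrank_eq hp hL
  have : Fact p.Prime := ⟨hp⟩
  have : IsCyclic (L ≃ₐ[K] L) :=
    isCyclic_of_prime_card ((IsGalois.card_aut_eq_finrank K L).trans hL)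
  subst hL
  exact nonempty_algHom_of_pow_eq hζ hD

lemma exists_field_exists_not_isKummerNorm {p : ℕ} (hp : p.Prime) :
    ∃ (K : Type u) (_ : Field K) (ζ a : K) (b : ℕ → K), CharZero K ∧ IsPSpecial p K ∧
      IsPrimitiveRoot ζ p ∧ a ≠ 0 ∧ (∀ n, b n ≠ 0) ∧ (∀ n, ¬IsKummerNorm p ζ a (b n)) ∧
      (∀ n m, n ≠ m → ¬IsKummerNorm p ζ a (b n / b m)) ∧
      ∀ n c, HasSymbolRoot p ζ a (b n) c := by
  obtain ⟨F, _, ζ, a, b, _, hζ, ha, hb0, hb, hdiv⟩ :=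
    exists_infinite_family_not_isKummerNorm.{u} hp
  obtain ⟨K, _, g, hg, hK, hroot⟩ := exists_isPSpecial_extension_hasSymbolRoot hp hζ ha (hb 0)
  have hgb n : g (b n) ≠ 0 := (_root_.map_ne_zero g).2 (hb0 n)
  refine ⟨K, inferInstance, g ζ, g a, fun n => g (b n), charZero_of_injective_ringHom g.injective,
    hK, hζ.map_of_injective g.injective, (_root_.map_ne_zero g).2 ha, hgb,
    fun n h => hb n (hg _ h), fun n m hnm h => hdiv n m hnm (hg _ ?_),
    fun n c => hroot _ c (hgb n)⟩
  rwa [_root_.map_div₀]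

lemma exists_infinite_family_division_algebras {p : ℕ} (hp : p.Prime) :
    ∃ (K : Type u) (_ : Field K) (D : ℕ → Type u) (_ : ∀ n, DivisionRing (D n))
      (_ : ∀ n, Algebra K (D n)), (∀ n, IsCentralDivisionOfDeg K (D n) p) ∧
      (∀ n m, n ≠ m → IsEmpty (D n ≃ₐ[K] D m)) ∧
      ∀ n (L : Type u) [Field L] [Algebra K L], Module.finrank K L = p →
        Nonempty (L →ₐ[K] D n) := by
  obtain ⟨K, _, ζ, a, b, _, hK, hζ, ha, hb0, hb, hdiv, hroot⟩ :=
    exists_field_exists_not_isKummerNorm.{u} hp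
  choose D _ _ i j hD hij hcomm using
    fun n => exists_division_symbolAlgebra hp hζ ha (hb0 n) (hb n)
  refine ⟨K, inferInstance, D, inferInstance, inferInstance, hD, fun n m hnm => ⟨fun φ => ?_⟩,
    fun n L _ _ hL => hK.nonempty_algHom hp hζ hL
      fun c => (hij n).exists_pow_eq hp.pos hζ (hroot n c)⟩
  have : FiniteDimensional K (D n) := (hD n).2.1
  exact hdiv m n hnm.symm ((hij n).isKummerNorm_div ((hij m).map φ.symm.toAlgHom) hp.pos hζ ha
    (hb0 n) (irreducible_of_not_isKummerNorm hp hζ ha (hb n)) (hcomm n))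

end InfiniteGenus

/-- for any prime `p` there is a field `K` and a central division `K`-algebra
of degree `p` with infinite genus. -/
theorem exists_division_algebra_with_infinite_genus (p : ℕ) (hp : p.Prime) :
    Nonempty (InfiniteGenusWitness.{u} p) := by
  obtain ⟨K, _, D, _, _, hD, hiso, hembed⟩ :=
    InfiniteGenus.exists_infinite_family_division_algebras.{u} hp
  exact ⟨{
    K := K
    D := D 0
    hD := hD 0
    D' := D
    hD' := hD
    noniso := hiso
    sameMaxSubfields := fun n L _ _ hL => ⟨fun _ => hembed n L hL, fun _ => hembed 0 L hL⟩ }⟩
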